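/- Let 1 ≤ p, q, r, s ≤ ∞ satisfy p ≤ q' and q ≤ min{r, r', s, s'}. Then there exists a constant C > 0 such that for every Schwartz function a on ℝ^{2d} and every Schwartz function f on ℝ^d one has ‖a(x,D)f‖_{M^{r,s}} ≤ C · ‖a‖_{M^{p,q}} · ‖f‖_{M^{r,s}}. -/

import Mathlib

open MeasureTheory SchwartzMap Complex ENNReal NNReal

noncomputable section

/-- Mixed `L^p`-type norm of an `ℝ≥0∞`-valued function, with the usual
`essSup` modification when `p = ∞`. -/
def lqNorm {α : Type*} [MeasurableSpace α] (μ : Measure α) (p : ℝ≥0∞)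
    (f : α → ℝ≥0∞) : ℝ≥0∞ :=
  if p = ∞ then essSup f μ else (∫⁻ a, f a ^ p.toReal ∂μ) ^ (1 / p.toReal)

/-- Conjugate exponent in `ℝ≥0∞` : `1/p + 1/p' = 1`, with `1' = ∞`, `∞' = 1`. -/
def dualExp (p : ℝ≥0∞) : ℝ≥0∞ :=
  if p = 1 then ∞ else if p = ∞ then 1 else ENNReal.ofReal (p.toReal / (p.toReal - 1))

/-- `1/p` as a real number, with the convention `1/∞ = 0`. -/
def invR (p : ℝ≥0∞) : ℝ := (p⁻¹).toReal

/-- The Gaussian window `G(t) = exp(-π |t|²)` (as a complex-valued function). -/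
def gaussWin {ι : Type*} [Fintype ι] (t : EuclideanSpace ℝ ι) : ℂ :=
  Complex.exp (-(Real.pi * ‖t‖ ^ 2))

/-- Short-time Fourier transform with Gaussian window:
`V_G F (x, ω) = ∫ F t * conj (G (t - x)) * exp (-2πi ω⬝t) dt`. -/
def STFT {ι : Type*} [Fintype ι] (F : EuclideanSpace ℝ ι → ℂ)
    (x ω : EuclideanSpace ℝ ι) : ℂ :=
  ∫ t, F t * (starRingEnd ℂ) (gaussWin (t - x)) *
    Complex.exp (Complex.I * (-(2 * Real.pi * (inner ℝ ω t : ℝ))))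

/-- Modulation space norm `M^{p,q}`. -/
def modNorm {ι : Type*} [Fintype ι] (p q : ℝ≥0∞)
    (F : EuclideanSpace ℝ ι → ℂ) : ℝ≥0∞ :=
  lqNorm volume q fun ω => lqNorm volume p fun x => (‖STFT F x ω‖₊ : ℝ≥0∞)

/-- Wiener amalgam norm `W(𝓕 L^p, L^q)` (local component Fourier–Lebesgue). -/
def wFLNorm {ι : Type*} [Fintype ι] (p q : ℝ≥0∞)
    (F : EuclideanSpace ℝ ι → ℂ) : ℝ≥0∞ :=
  lqNorm volume q fun x => lqNorm volume p fun ω => (‖STFT F x ω‖₊ : ℝ≥0∞)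

/-- The unit cube `[0,1)^d`. -/
def unitCube (d : ℕ) : Set (EuclideanSpace ℝ (Fin d)) :=
  {x | ∀ i, x i ∈ Set.Ico (0 : ℝ) 1}

/-- Wiener amalgam norm
`‖f‖_{W(L^r,L^s)} = ( Σ_{n ∈ ℤ^d} ( ∫_{[0,1)^d} |f(x+n)|^r dx )^{s/r} )^{1/s}`. -/
def wNorm (d : ℕ) (r s : ℝ≥0∞) (f : EuclideanSpace ℝ (Fin d) → ℂ) : ℝ≥0∞ :=
  lqNorm (Measure.count : Measure (Fin d → ℤ)) s fun n =>
    lqNorm (volume.restrict (unitCube d)) r fun x =>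
      (‖f (x + show EuclideanSpace ℝ (Fin d) from WithLp.toLp 2 fun i => (n i : ℝ))‖₊ : ℝ≥0∞)

/-- Pairing `(x, ω) ∈ ℝ^d × ℝ^d ↦ ℝ^{2d}`. -/
def pairE {d : ℕ} (x ω : EuclideanSpace ℝ (Fin d)) :
    EuclideanSpace ℝ (Fin d ⊕ Fin d) :=
  WithLp.toLp 2 fun i => Sum.elim (fun j => x j) (fun j => ω j) i

/-- First (space) component of a point of `ℝ^{2d}`. -/
def xpart {d : ℕ} (z : EuclideanSpace ℝ (Fin d ⊕ Fin d)) :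
    EuclideanSpace ℝ (Fin d) := WithLp.toLp 2 fun i => z (Sum.inl i)

/-- Second (frequency) component of a point of `ℝ^{2d}`. -/
def wpart {d : ℕ} (z : EuclideanSpace ℝ (Fin d ⊕ Fin d)) :
    EuclideanSpace ℝ (Fin d) := WithLp.toLp 2 fun i => z (Sum.inr i)

/-- Fourier transform `f̂(ω) = ∫ f t e^{-2πi t⬝ω} dt`. -/
def fTrans {ι : Type*} [Fintype ι] (f : EuclideanSpace ℝ ι → ℂ)
    (ω : EuclideanSpace ℝ ι) : ℂ :=
  ∫ t, f t * Complex.exp (Complex.I * (-(2 * Real.pi * (inner ℝ t ω : ℝ))))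

/-- Kohn–Nirenberg operator `a(x,D) f (x) = ∫ a(x,ω) f̂(ω) e^{2πi x⬝ω} dω`. -/
def KNop {d : ℕ} (a : EuclideanSpace ℝ (Fin d ⊕ Fin d) → ℂ)
    (f : EuclideanSpace ℝ (Fin d) → ℂ) (x : EuclideanSpace ℝ (Fin d)) : ℂ :=
  ∫ ω, a (pairE x ω) * fTrans f ω *
    Complex.exp (Complex.I * (2 * Real.pi * (inner ℝ x ω : ℝ)))

/-- Weyl operator `L_σ f (x) = ∫∫ e^{2πi (x-y)⬝ω} σ((x+y)/2, ω) f(y) dy dω`. -/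
def weylOp {d : ℕ} (σ : EuclideanSpace ℝ (Fin d ⊕ Fin d) → ℂ)
    (f : EuclideanSpace ℝ (Fin d) → ℂ) (x : EuclideanSpace ℝ (Fin d)) : ℂ :=
  ∫ y, ∫ ω, Complex.exp (Complex.I * (2 * Real.pi * (inner ℝ (x - y) ω : ℝ))) *
    σ (pairE ((2 : ℝ)⁻¹ • (x + y)) ω) * f y

/-- Cross-Wigner distribution
`W(g,f)(x,ω) = ∫ g(x+t/2) conj(f(x−t/2)) e^{−2πi ω⬝t} dt`. -/
def wigner {d : ℕ} (g f : EuclideanSpace ℝ (Fin d) → ℂ)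
    (z : EuclideanSpace ℝ (Fin d ⊕ Fin d)) : ℂ :=
  ∫ t, g (xpart z + (2 : ℝ)⁻¹ • t) * (starRingEnd ℂ) (f (xpart z - (2 : ℝ)⁻¹ • t)) *
    Complex.exp (Complex.I * (-(2 * Real.pi * (inner ℝ (wpart z) t : ℝ))))

end

noncomputable section

section LQ
variable {α β : Type*} [MeasurableSpace α] [MeasurableSpace β]

lemma lq_top (μ : Measure α) (f : α → ℝ≥0∞) : lqNorm μ ∞ f = essSup f μ := by simp [lqNorm]

lemma lq_fin (μ : Measure α) {p : ℝ≥0∞} (hp : p ≠ ∞) (f : α → ℝ≥0∞) :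
    lqNorm μ p f = (∫⁻ a, f a ^ p.toReal ∂μ) ^ (1 / p.toReal) := by simp [lqNorm, hp]

lemma lq_one (μ : Measure α) (f : α → ℝ≥0∞) : lqNorm μ 1 f = ∫⁻ a, f a ∂μ := by
  simp [lqNorm]

lemma toReal_pos_of {p : ℝ≥0∞} (h1 : 1 ≤ p) (hp : p ≠ ∞) : 0 < p.toReal :=
  ENNReal.toReal_pos (by intro h; simp [h] at h1) hp

lemma lq_fin_pow (μ : Measure α) {p : ℝ≥0∞} (h1 : 1 ≤ p) (hp : p ≠ ∞) (f : α → ℝ≥0∞) :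
    lqNorm μ p f ^ p.toReal = ∫⁻ a, f a ^ p.toReal ∂μ := by
  have := (toReal_pos_of h1 hp).ne'
  rw [lq_fin μ hp, ← ENNReal.rpow_mul, one_div, inv_mul_cancel₀ this, ENNReal.rpow_one]

lemma lq_mono_ae {μ : Measure α} {p : ℝ≥0∞} {f g : α → ℝ≥0∞} (h : ∀ᵐ x ∂μ, f x ≤ g x) :
    lqNorm μ p f ≤ lqNorm μ p g := by
  by_cases hp : p = ∞
  · subst hp
    rw [lq_top, lq_top]
    exact essSup_mono_ae h
  · rw [lq_fin μ hp, lq_fin μ hp]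
    refine ENNReal.rpow_le_rpow (lintegral_mono_ae ?_) (by positivity)
    filter_upwards [h] with x hx
    exact ENNReal.rpow_le_rpow hx (by positivity)

lemma lq_mono {μ : Measure α} {p : ℝ≥0∞} {f g : α → ℝ≥0∞} (h : ∀ x, f x ≤ g x) :
    lqNorm μ p f ≤ lqNorm μ p g := lq_mono_ae (ae_of_all _ h)

lemma lq_const_mul {μ : Measure α} {p : ℝ≥0∞} (h1 : 1 ≤ p) {f : α → ℝ≥0∞} (hf : Measurable f)
    (c : ℝ≥0∞) : lqNorm μ p (fun x => c * f x) = c * lqNorm μ p f := by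
  by_cases hp : p = ∞
  · subst hp
    rw [lq_top, lq_top]
    exact ENNReal.essSup_const_mul
  · have h0 := toReal_pos_of h1 hp
    rw [lq_fin μ hp, lq_fin μ hp]
    simp_rw [ENNReal.mul_rpow_of_nonneg _ _ h0.le]
    rw [lintegral_const_mul _ (hf.pow_const _), ENNReal.mul_rpow_of_nonneg _ _ (by positivity),
      ← ENNReal.rpow_mul, one_div, mul_inv_cancel₀ h0.ne', ENNReal.rpow_one]

lemma lq_pow {μ : Measure α} {p q : ℝ≥0∞} (h1 : 1 ≤ q) (hq : q ≠ ∞) (f : α → ℝ≥0∞)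
    (hqp : q ≤ p) :
    lqNorm μ (p / q) (fun x => f x ^ q.toReal) = lqNorm μ p f ^ q.toReal := by
  have h0 := toReal_pos_of h1 hq
  by_cases hp : p = ∞
  · subst hp
    rw [ENNReal.top_div_of_ne_top hq, lq_top, lq_top]
    exact (ENNReal.orderIsoRpow q.toReal h0).essSup_apply f μ |>.symm
  · have h2 : p / q ≠ ∞ := ENNReal.div_ne_top hp (by intro h; simp [h] at h1)
    rw [lq_fin μ h2, lq_fin μ hp]
    simp_rw [← ENNReal.rpow_mul]
    rw [ENNReal.toReal_div]
    have hpp := toReal_pos_of (h1.trans hqp) hp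
    congr 1
    · congr 1; ext x; congr 1; field_simp
    · field_simp

lemma lq_meas {μ : Measure α} [SFinite μ] (p : ℝ≥0∞) {f : α → β → ℝ≥0∞}
    (hf : Measurable (Function.uncurry f)) : Measurable fun y => lqNorm μ p fun x => f x y := by
  by_cases hp : p = ∞
  · subst hp
    simp_rw [lq_top]
    refine measurable_of_Iic fun c => ?_
    have : (fun y => essSup (fun x => f x y) μ) ⁻¹' Set.Iic c
        = (fun y => μ ((fun x => (x, y)) ⁻¹' {z | c < Function.uncurry f z})) ⁻¹' {0} := by
      ext y
      simp only [Set.mem_preimage, Set.mem_Iic, Set.mem_singleton_iff]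
      constructor
      · intro h
        have h2 : ∀ᵐ x ∂μ, f x y ≤ c := by
          filter_upwards [ENNReal.ae_le_essSup (μ := μ) (fun x => f x y)] with x hx
          exact hx.trans h
        rw [ae_iff] at h2
        simpa using h2
      · intro h
        refine essSup_le_of_ae_le c ?_
        show ∀ᵐ x ∂μ, f x y ≤ c
        rw [ae_iff]
        simpa using h
    rw [this]
    exact measurable_measure_prodMk_right (measurableSet_lt measurable_const hf)
      (measurableSet_singleton 0)
  · simp_rw [lq_fin μ hp]
    refine Measurable.pow_const ?_ _
    refine Measurable.lintegral_prod_right (f := fun y x => f x y ^ p.toReal) ?_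
    exact (hf.comp measurable_swap).pow_const _

lemma lq_zero_ae {μ : Measure α} {p : ℝ≥0∞} (h1 : 1 ≤ p) (hp : p ≠ ∞) {f : α → ℝ≥0∞}
    (hf : Measurable f) (h : lqNorm μ p f = 0) : ∀ᵐ x ∂μ, f x = 0 := by
  have h0 := toReal_pos_of h1 hp
  have h2 := lq_fin_pow μ h1 hp f
  rw [h, ENNReal.zero_rpow_of_pos h0, eq_comm, lintegral_eq_zero_iff (hf.pow_const _)] at h2
  filter_upwards [h2] with x hx
  simpa [h0, h0.le, not_lt.mpr h0.le] using hx

lemma lq_zero_ae_prod {μ : Measure α} {ν : Measure β} [SFinite μ] [SFinite ν]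
    {p : ℝ≥0∞} (h1 : 1 ≤ p) (hp : p ≠ ∞) {f : α → β → ℝ≥0∞}
    (hf : Measurable (Function.uncurry f)) :
    ∀ᵐ x ∂μ, ∀ᵐ y ∂ν, lqNorm μ p (fun x => f x y) = 0 → f x y = 0 := by
  have hm : MeasurableSet {z : α × β | lqNorm μ p (fun x => f x z.2) = 0 → f z.1 z.2 = 0} := by
    have e : {z : α × β | lqNorm μ p (fun x => f x z.2) = 0 → f z.1 z.2 = 0}
      = {z : α × β | lqNorm μ p (fun x => f x z.2) = 0}ᶜ ∪ {z | f z.1 z.2 = 0} := by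
      ext z; simp [imp_iff_not_or]
    rw [e]
    refine MeasurableSet.union (MeasurableSet.compl ?_) ?_
    · exact ((lq_meas p hf).comp measurable_snd) (measurableSet_singleton 0)
    · exact hf (measurableSet_singleton 0)
  rw [Measure.ae_ae_comm hm]
  refine ae_of_all _ fun y => ?_
  by_cases h : lqNorm μ p (fun x => f x y) = 0
  · filter_upwards [lq_zero_ae h1 hp (hf.comp measurable_prodMk_right) h] with x hx _ using hx
  · exact ae_of_all _ fun x h' => absurd h' h

lemma pow_aux {n : ℝ≥0∞} {P q : ℝ} (hq : 0 < q) (hP : q ≤ P) : n ^ P * n ^ (q - P) ≤ n ^ q := by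
  have hP' := hq.trans_le hP
  by_cases h0 : n = 0
  · simp [h0, hP']
  by_cases ht : n = ∞
  · simp [ht, hq]
  · rw [← ENNReal.rpow_add _ _ h0 ht]; simp

/-- Minkowski's integral inequality. -/
lemma lq_minkowski {μ : Measure α} {ν : Measure β} [SFinite μ] [SFinite ν]
    {p : ℝ≥0∞} (h1 : 1 ≤ p) {f : α → β → ℝ≥0∞} (hf : Measurable (Function.uncurry f)) :
    lqNorm μ p (fun x => ∫⁻ y, f x y ∂ν) ≤ ∫⁻ y, lqNorm μ p (fun x => f x y) ∂ν := by
  have hN := lq_meas (μ := μ) p hf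
  by_cases hp : p = ∞
  · subst hp
    rw [lq_top]
    refine essSup_le_of_ae_le _ ?_
    have hm : MeasurableSet {z : α × β | f z.1 z.2 ≤ lqNorm μ ∞ (fun x => f x z.2)} :=
      measurableSet_le hf (hN.comp measurable_snd)
    have : ∀ᵐ x ∂μ, ∀ᵐ y ∂ν, f x y ≤ lqNorm μ ∞ (fun x => f x y) := by
      rw [Measure.ae_ae_comm hm]
      refine ae_of_all _ fun y => ?_
      rw [lq_top]
      exact ENNReal.ae_le_essSup _
    filter_upwards [this] with x hx
    exact lintegral_mono_ae hx
  have h0 := toReal_pos_of h1 hp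
  have h1' : 1 ≤ p.toReal := by
    rw [← ENNReal.toReal_one]; exact ENNReal.toReal_mono hp h1
  set P := p.toReal with hP
  set N := fun y => lqNorm μ p (fun x => f x y) with hNdef
  by_cases hfin : ∫⁻ y, N y ∂ν = ∞
  · rw [hfin]; exact le_top
  have hNt : ∀ᵐ y ∂ν, N y < ∞ := ae_lt_top hN hfin
  have key : ∀ᵐ x ∂μ, ∫⁻ y, f x y ∂ν ≤
      (∫⁻ y, f x y ^ P * N y ^ (1 - P) ∂ν) ^ (1 / P) * (∫⁻ y, N y ∂ν) ^ (1 - 1 / P) := by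
    filter_upwards [lq_zero_ae_prod (μ := μ) (ν := ν) h1 hp hf] with x hx
    have hfx : Measurable (f x) := hf.comp measurable_prodMk_left
    refine le_trans (lintegral_mono_ae ?_) (ENNReal.lintegral_mul_norm_pow_le
      ((hfx.pow_const P).mul (hN.pow_const (1 - P))).aemeasurable hN.aemeasurable
      (by positivity) (by rw [sub_nonneg, div_le_one h0]; exact h1') (by ring))
    filter_upwards [hx, hNt] with y hy hyt
    by_cases hn : N y = 0
    · simp [hy hn]
    · refine le_of_eq ?_
      simp only [Pi.mul_apply]
      rw [ENNReal.mul_rpow_of_nonneg _ _ (by positivity), ← ENNReal.rpow_mul, ← ENNReal.rpow_mul,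
        mul_assoc, ← ENNReal.rpow_add _ _ hn hyt.ne]
      have e1 : P * (1 / P) = 1 := by field_simp
      have e2 : (1 - P) * (1 / P) + (1 - 1 / P) = 0 := by field_simp; ring
      rw [e1, e2]; simp
  refine (lq_mono_ae key).trans ?_
  rw [lq_fin μ hp, ← hP]
  simp_rw [ENNReal.mul_rpow_of_nonneg _ _ h0.le, ← ENNReal.rpow_mul]
  have e1 : 1 / P * P = 1 := by field_simp
  simp_rw [e1, ENNReal.rpow_one]
  have hm : Measurable (Function.uncurry fun x y => f x y ^ P * N y ^ (1 - P)) :=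
    (hf.pow_const P).mul ((hN.comp measurable_snd).pow_const (1 - P))
  rw [lintegral_mul_const _ hm.lintegral_prod_right]
  rw [lintegral_lintegral_swap hm.aemeasurable]
  have : ∀ y, ∫⁻ x, f x y ^ P * N y ^ (1 - P) ∂μ ≤ N y := by
    intro y
    have hfy : Measurable (fun x => f x y) := hf.comp measurable_prodMk_right
    rw [lintegral_mul_const _ (hfy.pow_const P)]
    have := lq_fin_pow μ h1 hp (fun x => f x y)
    rw [← this]
    simpa using pow_aux (n := N y) one_pos h1'
  calc _ ≤ ((∫⁻ y, N y ∂ν) * (∫⁻ y, N y ∂ν) ^ ((1 - 1 / P) * P)) ^ (1 / P) := by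
        gcongr with y
        exact this y
    _ ≤ _ := by
        have e3 : (1 - 1 / P) * P = P - 1 := by field_simp
        rw [e3, ENNReal.mul_rpow_of_nonneg _ _ (by positivity), ← ENNReal.rpow_mul,
          ← ENNReal.rpow_add_of_nonneg _ _ (by positivity) (mul_nonneg (by linarith) (by positivity))]
        have e4 : 1 / P + (P - 1) * (1 / P) = 1 := by field_simp; ring
        rw [e4, ENNReal.rpow_one]

/-- mixed-norm Minkowski. -/
lemma lq_mixed {μ : Measure α} {ν : Measure β} [SFinite μ] [SFinite ν]
    {p q : ℝ≥0∞} (h1 : 1 ≤ q) (hq : q ≠ ∞) (hqp : q ≤ p) {f : α → β → ℝ≥0∞}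
    (hf : Measurable (Function.uncurry f)) :
    lqNorm μ p (fun x => lqNorm ν q (fun y => f x y)) ≤
      lqNorm ν q (fun y => lqNorm μ p (fun x => f x y)) := by
  have h0 := toReal_pos_of h1 hq
  rw [← ENNReal.rpow_le_rpow_iff h0, ← lq_pow h1 hq _ hqp, lq_fin_pow ν h1 hq]
  simp_rw [lq_fin_pow ν h1 hq, ← lq_pow h1 hq _ hqp]
  refine lq_minkowski ?_ (hf.pow_const _)
  rw [ENNReal.le_div_iff_mul_le (Or.inr (by intro h; simp [h] at hqp; simp [hqp] at h1)) (Or.inl hq)]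
  simpa

lemma lq_prod_le {μ : Measure α} {ν : Measure β} [SFinite μ] [SFinite ν]
    {p : ℝ≥0∞} (h1 : 1 ≤ p) {f : α × β → ℝ≥0∞} (hf : Measurable f) :
    lqNorm μ p (fun x => lqNorm ν p (fun y => f (x, y))) ≤ lqNorm (μ.prod ν) p f := by
  by_cases hp : p = ∞
  · subst hp
    simp_rw [lq_top]
    refine essSup_le_of_ae_le _ ?_
    have := Measure.ae_ae_of_ae_prod (ENNReal.ae_le_essSup (μ := μ.prod ν) f)
    filter_upwards [this] with x hx
    exact essSup_le_of_ae_le _ hx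
  · have h0 := toReal_pos_of h1 hp
    rw [← ENNReal.rpow_le_rpow_iff h0, lq_fin_pow _ h1 hp, lq_fin_pow _ h1 hp]
    simp_rw [lq_fin_pow ν h1 hp]
    rw [lintegral_prod _ (hf.pow_const _).aemeasurable]

lemma lq_comp {μ : Measure α} {ν : Measure β} {p : ℝ≥0∞} {f : β → ℝ≥0∞} (hf : Measurable f)
    {e : α → β} (he : MeasurePreserving e μ ν) :
    lqNorm μ p (fun x => f (e x)) = lqNorm ν p f := by
  by_cases hp : p = ∞
  · subst hp
    rw [lq_top, lq_top, ← he.map_eq]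
    exact (essSup_map_measure hf.aemeasurable he.measurable.aemeasurable).symm
  · rw [lq_fin _ hp, lq_fin _ hp, he.lintegral_comp (hf.pow_const _)]
end LQ

/-- conjugate pairs with first exponent finite. -/
def ConjPair (q Q : ℝ≥0∞) : Prop :=
  (q = 1 ∧ Q = ∞) ∨ (q ≠ ∞ ∧ Q ≠ ∞ ∧ 1 / q.toReal + 1 / Q.toReal = 1)

lemma young_pt {k N F : ℝ≥0∞} {q r Q : ℝ} (hq : 0 < q) (hqr : q ≤ r) (hrQ : r ≤ Q)
    (h0 : N ≠ 0) (ht : N ≠ ∞) :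
    k * F = (k ^ Q * N ^ (q - Q)) ^ (1 / Q) * (N ^ q * F ^ r) ^ (1 / r - 1 / Q) *
      (N ^ q) ^ (1 / q - 1 / r) * (F ^ r) ^ (1 / Q) := by
  have hr : 0 < r := hq.trans_le hqr
  have hQ : 0 < Q := hr.trans_le hrQ
  have w2 : 0 ≤ 1 / r - 1 / Q := by
    rw [sub_nonneg]; exact one_div_le_one_div_of_le hr hrQ
  have w1 : 0 ≤ 1 / Q := by positivity
  rw [ENNReal.mul_rpow_of_nonneg _ _ w1, ENNReal.mul_rpow_of_nonneg _ _ w2]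
  simp only [← ENNReal.rpow_mul]
  have e1 : Q * (1 / Q) = 1 := by field_simp
  rw [e1, ENNReal.rpow_one]
  have e2 : F = F ^ (r * (1 / r - 1 / Q)) * F ^ (r * (1 / Q)) := by
    rw [← ENNReal.rpow_add_of_nonneg _ _ (by positivity) (by positivity)]
    have : r * (1 / r - 1 / Q) + r * (1 / Q) = 1 := by field_simp; ring
    rw [this, ENNReal.rpow_one]
  have e3 : N ^ ((q - Q) * (1 / Q)) * N ^ (q * (1 / r - 1 / Q)) * N ^ (q * (1 / q - 1 / r)) = 1 := by
    rw [← ENNReal.rpow_add _ _ h0 ht, ← ENNReal.rpow_add _ _ h0 ht]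
    have : (q - Q) * (1 / Q) + q * (1 / r - 1 / Q) + q * (1 / q - 1 / r) = 0 := by field_simp; ring
    rw [this, ENNReal.rpow_zero]
  calc k * F = k * (F ^ (r * (1 / r - 1 / Q)) * F ^ (r * (1 / Q))) * 1 := by rw [← e2, mul_one]
    _ = _ := by rw [← e3]; ring

lemma holder4 {α : Type*} [MeasurableSpace α] {μ : Measure α} {a b c e : α → ℝ≥0∞}
    (ha : Measurable a) (hb : Measurable b) (hc : Measurable c) (he : Measurable e)
    {w1 w2 w3 w4 : ℝ} (h1 : 0 ≤ w1) (h2 : 0 ≤ w2) (h3 : 0 ≤ w3) (h4 : 0 ≤ w4)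
    (hs : w1 + w2 + w3 + w4 = 1) :
    ∫⁻ x, a x ^ w1 * b x ^ w2 * c x ^ w3 * e x ^ w4 ∂μ ≤
      (∫⁻ x, a x ∂μ) ^ w1 * (∫⁻ x, b x ∂μ) ^ w2 * (∫⁻ x, c x ∂μ) ^ w3 * (∫⁻ x, e x ∂μ) ^ w4 := by
  have := ENNReal.lintegral_prod_norm_pow_le (μ := μ) (Finset.univ : Finset (Fin 4))
    (f := ![a, b, c, e]) (p := ![w1, w2, w3, w4])
    (by intro i _; fin_cases i <;> simp [ha.aemeasurable, hb.aemeasurable, hc.aemeasurable, he.aemeasurable])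
    (by simp [Fin.sum_univ_four, hs])
    (by intro i _; fin_cases i <;> simp [h1, h2, h3, h4])
  simpa [Fin.prod_univ_four] using this

lemma young_main {ι : Type*} [Fintype ι] {q r Q : ℝ≥0∞} (h1 : 1 ≤ q) (hqr : q ≤ r) (hrQ : r ≤ Q)
    (hc : ConjPair q Q) {k : EuclideanSpace ℝ ι → EuclideanSpace ℝ ι → ℝ≥0∞}
    (hk : Measurable (Function.uncurry k)) {F : EuclideanSpace ℝ ι → ℝ≥0∞} (hF : Measurable F) :
    lqNorm volume r (fun x => ∫⁻ η, k x η * F (x + η)) ≤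
      lqNorm volume q (fun η => lqNorm volume Q (fun x => k x η)) * lqNorm volume r F := by
  have hN := lq_meas (μ := (volume : Measure (EuclideanSpace ℝ ι))) Q hk
  have hr1 := h1.trans hqr
  have hFm : Measurable (Function.uncurry fun x η : EuclideanSpace ℝ ι => F (x + η)) :=
    hF.comp measurable_add
  have hFm2 : Measurable (Function.uncurry fun x η : EuclideanSpace ℝ ι => k x η * F (x + η)) :=
    hk.mul hFm
  rcases hc with ⟨rfl, rfl⟩ | ⟨hqt, hQt, hsum⟩
  · rw [lq_one, ← lintegral_mul_const _ hN]
    refine (lq_minkowski hr1 hFm2).trans (lintegral_mono fun η => ?_)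
    calc _ ≤ lqNorm volume r (fun x => lqNorm volume ∞ (fun x => k x η) * F (x + η)) := by
          refine lq_mono_ae ?_
          rw [lq_top]
          filter_upwards [ENNReal.ae_le_essSup (μ := volume) (fun x => k x η)] with x hx
          gcongr
      _ = _ := by
          have hFη : Measurable (fun x => F (x + η)) := hF.comp (measurable_add_const η)
          rw [lq_const_mul hr1 hFη,
            lq_comp hF (measurePreserving_add_right volume η)]
  have hrt : r ≠ ∞ := ne_top_of_le_ne_top hQt hrQ
  have hQ1 := hr1.trans hrQ
  set N := fun η => lqNorm volume Q (fun x => k x η) with hNdef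
  by_cases hF0 : lqNorm volume r F = 0
  · have hae := lq_zero_ae hr1 hrt hF hF0
    have : ∀ x, ∫⁻ η, k x η * F (x + η) = 0 := by
      intro x
      have h2 : ∀ᵐ η, F (x + η) = 0 :=
        (measurePreserving_add_left volume x).quasiMeasurePreserving.ae hae
      rw [lintegral_congr_ae (g := fun _ => 0)]
      · simp
      · filter_upwards [h2] with η hη; simp [hη]
    simp_rw [this]
    rw [lq_fin _ hrt]
    have := toReal_pos_of hr1 hrt
    simp [this]
  by_cases hS : lqNorm volume q N = ∞
  · rw [hS, ENNReal.top_mul hF0]; exact le_top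
  have q0 := toReal_pos_of h1 hqt
  have r0 := toReal_pos_of hr1 hrt
  have Q0 := toReal_pos_of hQ1 hQt
  have hqr' : q.toReal ≤ r.toReal := ENNReal.toReal_mono hrt hqr
  have hrQ' : r.toReal ≤ Q.toReal := ENNReal.toReal_mono hQt hrQ
  set S := ∫⁻ η, N η ^ q.toReal with hSdef
  set T := ∫⁻ x, F x ^ r.toReal with hTdef
  have hSt : S ≠ ∞ := by
    rw [hSdef, ← lq_fin_pow volume h1 hqt]
    exact ENNReal.rpow_ne_top_of_nonneg q0.le hS
  have hNt : ∀ᵐ η, N η ≠ ∞ := by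
    filter_upwards [ae_lt_top (hN.pow_const _) hSt] with η hη h
    simp [h, q0] at hη
  have w2 : 0 ≤ 1 / r.toReal - 1 / Q.toReal := by
    rw [sub_nonneg]; exact one_div_le_one_div_of_le r0 hrQ'
  have w3 : 0 ≤ 1 / q.toReal - 1 / r.toReal := by
    rw [sub_nonneg]; exact one_div_le_one_div_of_le q0 hqr'
  have mP : Measurable (Function.uncurry fun x η => k x η ^ Q.toReal * N η ^ (q.toReal - Q.toReal)) :=
    (hk.pow_const _).mul ((hN.comp measurable_snd).pow_const _)
  have mR : Measurable (Function.uncurry fun x η => N η ^ q.toReal * F (x + η) ^ r.toReal) :=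
    ((hN.comp measurable_snd).pow_const _).mul (hFm.pow_const _)
  set P := fun x => ∫⁻ η, k x η ^ Q.toReal * N η ^ (q.toReal - Q.toReal) with hP
  set R := fun x => ∫⁻ η, N η ^ q.toReal * F (x + η) ^ r.toReal with hR
  have key : ∀ᵐ x, ∫⁻ η, k x η * F (x + η) ≤ P x ^ (1 / Q.toReal) *
      R x ^ (1 / r.toReal - 1 / Q.toReal) * S ^ (1 / q.toReal - 1 / r.toReal) *
        T ^ (1 / Q.toReal) := by
    filter_upwards [lq_zero_ae_prod (μ := volume) (ν := volume) hQ1 hQt hk] with x hx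
    have hT : T = ∫⁻ η, F (x + η) ^ r.toReal := by
      rw [hTdef]; exact (lintegral_add_left_eq_self (fun y => F y ^ r.toReal) x).symm
    rw [hT]
    refine le_trans (lintegral_mono_ae ?_) (holder4 (mP.comp measurable_prodMk_left)
      (mR.comp measurable_prodMk_left) (hN.pow_const _)
      ((hF.comp (measurable_const_add x)).pow_const _) (by positivity) w2 w3 (by positivity) ?_)
    · filter_upwards [hx, hNt] with η h3 h4
      by_cases h5 : N η = 0
      · simp [h3 h5]
      · exact (young_pt q0 hqr' hrQ' h5 h4).le
    · linarith
  refine (lq_mono_ae key).trans ?_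
  rw [lq_fin _ hrt, lq_fin _ hqt, lq_fin _ hrt, ← hSdef, ← hTdef]
  have hPS : ∫⁻ x, P x ≤ S := by
    rw [hP, lintegral_lintegral_swap mP.aemeasurable]
    refine lintegral_mono fun η => ?_
    have hkη : Measurable (fun x => k x η) := hk.comp measurable_prodMk_right
    rw [lintegral_mul_const _ (hkη.pow_const _), ← lq_fin_pow volume hQ1 hQt]
    exact pow_aux q0 (hqr'.trans hrQ')
  have hRS : ∫⁻ x, R x = S * T := by
    rw [hR, lintegral_lintegral_swap mR.aemeasurable]
    rw [hSdef, ← lintegral_mul_const _ (hN.pow_const _)]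
    refine lintegral_congr fun η => ?_
    have hFη : Measurable (fun x => F (x + η)) := hF.comp (measurable_add_const η)
    rw [lintegral_const_mul _ (hFη.pow_const _)]
    congr 1
    exact lintegral_add_right_eq_self (fun y => F y ^ r.toReal) η
  have mP' : Measurable P := mP.lintegral_prod_right
  have mR' : Measurable R := mR.lintegral_prod_right
  generalize r.toReal = r at *
  generalize q.toReal = q at *
  generalize Q.toReal = Q at *
  have pull : ∀ x, (P x ^ (1 / Q) * R x ^ (1 / r - 1 / Q) * S ^ (1 / q - 1 / r) * T ^ (1 / Q)) ^ r
      = (P x ^ (1 / Q * r) * R x ^ ((1 / r - 1 / Q) * r)) *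
        (S ^ ((1 / q - 1 / r) * r) * T ^ (1 / Q * r)) := by
    intro x
    simp only [ENNReal.mul_rpow_of_nonneg _ _ r0.le, ← ENNReal.rpow_mul]
    ring
  simp only [pull]
  have mPR : Measurable fun x => P x ^ (1 / Q * r) * R x ^ ((1 / r - 1 / Q) * r) :=
    (mP'.pow_const _).mul (mR'.pow_const _)
  rw [lintegral_mul_const _ mPR]
  have hh := ENNReal.lintegral_mul_norm_pow_le (μ := volume) mP'.aemeasurable mR'.aemeasurable
    (p := 1 / Q * r) (q := (1 / r - 1 / Q) * r) (by positivity) (by positivity) (by field_simp; ring)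
  have hh2 : (∫⁻ a, P a ^ (1 / Q * r) * R a ^ ((1 / r - 1 / Q) * r)) ≤
      S ^ (1 / Q * r) * (S * T) ^ ((1 / r - 1 / Q) * r) := by
    refine hh.trans ?_
    rw [hRS]
    gcongr
  calc _ ≤ ((S ^ (1 / Q * r) * (S * T) ^ ((1 / r - 1 / Q) * r)) *
        (S ^ ((1 / q - 1 / r) * r) * T ^ (1 / Q * r))) ^ (1 / r) := by
        gcongr
    _ = _ := by
        rw [ENNReal.mul_rpow_of_nonneg S T (by positivity)]
        have e1 : S ^ (1 / Q * r) * (S ^ ((1 / r - 1 / Q) * r) * T ^ ((1 / r - 1 / Q) * r)) *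
            (S ^ ((1 / q - 1 / r) * r) * T ^ (1 / Q * r)) = 
            S ^ (1 / Q * r) * S ^ ((1 / r - 1 / Q) * r) * S ^ ((1 / q - 1 / r) * r) *
            (T ^ ((1 / r - 1 / Q) * r) * T ^ (1 / Q * r)) := by ring
        rw [e1, ← ENNReal.rpow_add_of_nonneg _ _ (by positivity) (by positivity),
          ← ENNReal.rpow_add_of_nonneg _ _ (by positivity) (by positivity),
          ← ENNReal.rpow_add_of_nonneg _ _ (by positivity) (by positivity),
          ENNReal.mul_rpow_of_nonneg _ _ (by positivity), ← ENNReal.rpow_mul, ← ENNReal.rpow_mul]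
        congr 2 <;> (field_simp; ring)

lemma pairE_mp (d : ℕ) : MeasurePreserving
    (fun z : EuclideanSpace ℝ (Fin d) × EuclideanSpace ℝ (Fin d) => pairE z.1 z.2)
    (volume.prod volume) volume := by
  have h1 := (EuclideanSpace.volume_preserving_symm_measurableEquiv_toLp (Fin d)).prod
    (EuclideanSpace.volume_preserving_symm_measurableEquiv_toLp (Fin d))
  have h2 := (volume_measurePreserving_sumPiEquivProdPi_symm
    (fun _ : Fin d ⊕ Fin d => ℝ))
  have h3 := PiLp.volume_preserving_toLp (Fin d ⊕ Fin d)
  have h4 := h3.comp (h2.comp h1)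
  convert! h4 using 1

lemma meas2 {α β γ δ : Type*} [MeasurableSpace α] [MeasurableSpace β] [MeasurableSpace γ]
    [MeasurableSpace δ] {F : β → γ → δ} (hF : Measurable (Function.uncurry F)) {f : α → β}
    {g : α → γ} (hf : Measurable f) (hg : Measurable g) : Measurable (fun a => F (f a) (g a)) :=
  hF.comp (hf.prodMk hg)

lemma measurable_pairE {d : ℕ} {α : Type*} [MeasurableSpace α]
    {f g : α → EuclideanSpace ℝ (Fin d)} (hf : Measurable f) (hg : Measurable g) :
    Measurable (fun a => pairE (f a) (g a)) := (pairE_mp d).measurable.comp (hf.prodMk hg)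

def kapp {d : ℕ} (q Q : ℝ≥0∞)
    (K : EuclideanSpace ℝ (Fin d ⊕ Fin d) → EuclideanSpace ℝ (Fin d ⊕ Fin d) → ℝ≥0∞)
    (v ξ : EuclideanSpace ℝ (Fin d)) : ℝ≥0∞ :=
  lqNorm volume q fun η => lqNorm volume Q fun x => K (pairE x v) (pairE ξ η)

lemma kapp_meas0 {d : ℕ} (Q : ℝ≥0∞)
    {K : EuclideanSpace ℝ (Fin d ⊕ Fin d) → EuclideanSpace ℝ (Fin d ⊕ Fin d) → ℝ≥0∞}
    (hK : Measurable (Function.uncurry K)) :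
    Measurable (fun t : EuclideanSpace ℝ (Fin d) × (EuclideanSpace ℝ (Fin d) × EuclideanSpace ℝ (Fin d)) =>
      lqNorm volume Q fun x => K (pairE x t.2.1) (pairE t.2.2 t.1)) := by
  refine lq_meas Q (f := fun x (t : EuclideanSpace ℝ (Fin d) × (EuclideanSpace ℝ (Fin d) × EuclideanSpace ℝ (Fin d))) =>
      K (pairE x t.2.1) (pairE t.2.2 t.1)) ?_
  exact meas2 hK (measurable_pairE (by fun_prop) (by fun_prop))
      (measurable_pairE (by fun_prop) (by fun_prop))

lemma kapp_meas {d : ℕ} (q Q : ℝ≥0∞)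
    {K : EuclideanSpace ℝ (Fin d ⊕ Fin d) → EuclideanSpace ℝ (Fin d ⊕ Fin d) → ℝ≥0∞}
    (hK : Measurable (Function.uncurry K)) : Measurable (Function.uncurry (kapp q Q K)) :=
  lq_meas q (f := fun η (t : EuclideanSpace ℝ (Fin d) × EuclideanSpace ℝ (Fin d)) =>
      lqNorm volume Q fun x => K (pairE x t.1) (pairE t.2 η)) (kapp_meas0 Q hK)

lemma kapp_le {d : ℕ} {q Q : ℝ≥0∞} (h1 : 1 ≤ q) (hqt : q ≠ ∞) (hqQ : q ≤ Q)
    {K : EuclideanSpace ℝ (Fin d ⊕ Fin d) → EuclideanSpace ℝ (Fin d ⊕ Fin d) → ℝ≥0∞}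
    (hK : Measurable (Function.uncurry K)) (ξ : EuclideanSpace ℝ (Fin d)) :
    lqNorm volume Q (fun v => kapp q Q K v ξ) ≤
      lqNorm volume q (fun η => lqNorm volume Q (fun z => K z (pairE ξ η))) := by
  have m0 : Measurable (Function.uncurry
      (fun (v η : EuclideanSpace ℝ (Fin d)) => lqNorm volume Q fun x => K (pairE x v) (pairE ξ η))) :=
    (kapp_meas0 Q hK).comp (f := fun t : EuclideanSpace ℝ (Fin d) × EuclideanSpace ℝ (Fin d) =>
      (t.2, (t.1, ξ))) (by fun_prop)
  refine (lq_mixed h1 hqt hqQ m0).trans (lq_mono fun η => ?_)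
  have mK1 : Measurable (fun z => K z (pairE ξ η)) := meas2 hK measurable_id measurable_const
  have hsw : MeasurePreserving (fun z : EuclideanSpace ℝ (Fin d) × EuclideanSpace ℝ (Fin d) => pairE z.2 z.1)
      (volume.prod volume) volume := (pairE_mp d).comp Measure.measurePreserving_swap
  rw [← lq_comp mK1 hsw]
  exact lq_prod_le (f := fun z : EuclideanSpace ℝ (Fin d) × EuclideanSpace ℝ (Fin d) =>
    K (pairE z.2 z.1) (pairE ξ η)) (h1.trans hqQ) (mK1.comp hsw.measurable)

lemma kapp_le2 {d : ℕ} {q Q : ℝ≥0∞} (h1 : 1 ≤ q) (hqt : q ≠ ∞) (hqQ : q ≤ Q)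
    {K : EuclideanSpace ℝ (Fin d ⊕ Fin d) → EuclideanSpace ℝ (Fin d ⊕ Fin d) → ℝ≥0∞}
    (hK : Measurable (Function.uncurry K)) :
    lqNorm volume q (fun ξ => lqNorm volume Q (fun v => kapp q Q K v ξ)) ≤
      lqNorm volume q (fun ζ => lqNorm volume Q (fun z => K z ζ)) := by
  have mN : Measurable (fun ζ => lqNorm volume Q (fun z => K z ζ)) := lq_meas Q hK
  rw [← lq_comp mN (pairE_mp d)]
  refine (lq_mono (kapp_le h1 hqt hqQ hK)).trans ?_
  exact lq_prod_le (f := fun z : EuclideanSpace ℝ (Fin d) × EuclideanSpace ℝ (Fin d) =>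
    lqNorm volume Q (fun w => K w (pairE z.1 z.2))) h1 (mN.comp (pairE_mp d).measurable)

lemma normB1 {d : ℕ} {q r Q : ℝ≥0∞} (h1 : 1 ≤ q) (hqr : q ≤ r) (hrQ : r ≤ Q)
    (hc : ConjPair q Q)
    {K : EuclideanSpace ℝ (Fin d ⊕ Fin d) → EuclideanSpace ℝ (Fin d ⊕ Fin d) → ℝ≥0∞}
    (hK : Measurable (Function.uncurry K))
    {F : EuclideanSpace ℝ (Fin d) → EuclideanSpace ℝ (Fin d) → ℝ≥0∞}
    (hF : Measurable (Function.uncurry F)) (ω : EuclideanSpace ℝ (Fin d)) :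
    lqNorm volume r (fun x =>
      ∫⁻ ξ, ∫⁻ η, K (pairE x (ω - ξ)) (pairE ξ η) * F (x + η) (ω - ξ)) ≤
      ∫⁻ h, kapp q Q K (ω + h) (-h) * lqNorm volume r (fun u => F u (ω + h)) := by
  have e : ∫⁻ h, kapp q Q K (ω + h) (-h) * lqNorm volume r (fun u => F u (ω + h)) =
      ∫⁻ ξ, kapp q Q K (ω - ξ) ξ * lqNorm volume r (fun u => F u (ω - ξ)) := by
    rw [← lintegral_neg_eq_self]
    simp [sub_eq_add_neg]
  rw [e]
  refine (lq_minkowski (h1.trans hqr) ?_).trans (lintegral_mono fun ξ => ?_)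
  · refine Measurable.lintegral_prod_right
      (f := fun (t : EuclideanSpace ℝ (Fin d) × EuclideanSpace ℝ (Fin d)) η =>
        K (pairE t.1 (ω - t.2)) (pairE t.2 η) * F (t.1 + η) (ω - t.2)) ?_
    refine Measurable.mul ?_ ?_
    · exact meas2 hK (measurable_pairE (by fun_prop) (by fun_prop))
        (measurable_pairE (by fun_prop) (by fun_prop))
    · exact meas2 hF (by fun_prop) (by fun_prop)
  · refine young_main (k := fun x η => K (pairE x (ω - ξ)) (pairE ξ η))
      (F := fun u => F u (ω - ξ)) h1 hqr hrQ hc ?_ ?_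
    · exact meas2 hK (measurable_pairE (by fun_prop) (by fun_prop))
        (measurable_pairE (by fun_prop) (by fun_prop))
    · exact meas2 hF (by fun_prop) (by fun_prop)

lemma normB {d : ℕ} {q r s Q : ℝ≥0∞} (h1 : 1 ≤ q) (hqr : q ≤ r) (hrQ : r ≤ Q)
    (hqs : q ≤ s) (hsQ : s ≤ Q) (hqt : q ≠ ∞)
    (hc : ConjPair q Q)
    {K : EuclideanSpace ℝ (Fin d ⊕ Fin d) → EuclideanSpace ℝ (Fin d ⊕ Fin d) → ℝ≥0∞}
    (hK : Measurable (Function.uncurry K))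
    {F : EuclideanSpace ℝ (Fin d) → EuclideanSpace ℝ (Fin d) → ℝ≥0∞}
    (hF : Measurable (Function.uncurry F)) :
    lqNorm volume s (fun ω => lqNorm volume r (fun x =>
      ∫⁻ ξ, ∫⁻ η, K (pairE x (ω - ξ)) (pairE ξ η) * F (x + η) (ω - ξ))) ≤
    lqNorm volume q (fun ζ => lqNorm volume Q (fun z => K z ζ)) *
      lqNorm volume s (fun v => lqNorm volume r (fun u => F u v)) := by
  have mΦ : Measurable (fun v => lqNorm volume r (fun u => F u v)) := lq_meas r hF
  have mκ := kapp_meas q Q hK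
  refine (lq_mono (normB1 h1 hqr hrQ hc hK hF)).trans ?_
  refine (young_main (k := fun ω h => kapp q Q K (ω + h) (-h)) h1 hqs hsQ hc
    (meas2 mκ (by fun_prop) (by fun_prop)) mΦ).trans ?_
  refine mul_le_mul' ?_ le_rfl
  have e1 : ∀ h : EuclideanSpace ℝ (Fin d), lqNorm volume Q (fun ω => kapp q Q K (ω + h) (-h)) =
      lqNorm volume Q (fun v => kapp q Q K v (-h)) := fun h =>
    lq_comp (f := fun v => kapp q Q K v (-h)) (meas2 mκ measurable_id measurable_const)
      (measurePreserving_add_right volume h)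
  simp_rw [e1]
  rw [lq_comp (f := fun ξ => lqNorm volume Q (fun v => kapp q Q K v ξ)) (lq_meas Q mκ)
    (Measure.measurePreserving_neg volume)]
  exact kapp_le2 h1 hqt (hqr.trans hrQ) hK

lemma normC {ι : Type*} [Fintype ι] {Λ : Type*} [MeasurableSpace Λ] {ν : Measure Λ} [SFinite ν]
    {q Q : ℝ≥0∞} (h1 : 1 ≤ q) (hQ1 : 1 ≤ Q)
    {A : EuclideanSpace ℝ ι → EuclideanSpace ℝ ι → ℝ≥0∞} (hA : Measurable (Function.uncurry A))
    {m : Λ → ℝ≥0∞} (hm : Measurable m) {φ ψ : Λ → EuclideanSpace ℝ ι} (hφ : Measurable φ)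
    (hψ : Measurable ψ) :
    lqNorm volume q (fun ζ => lqNorm volume Q (fun z => ∫⁻ l, m l * A (z + φ l) (ζ - ψ l) ∂ν)) ≤
      (∫⁻ l, m l ∂ν) * lqNorm volume q (fun ζ => lqNorm volume Q (fun z => A z ζ)) := by
  have mN : Measurable (fun ζ => lqNorm volume Q (fun z => A z ζ)) := lq_meas Q hA
  have e : ∀ ζ, lqNorm volume Q (fun z => ∫⁻ l, m l * A (z + φ l) (ζ - ψ l) ∂ν) ≤
      ∫⁻ l, m l * lqNorm volume Q (fun z => A z (ζ - ψ l)) ∂ν := by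
    intro ζ
    refine (lq_minkowski hQ1 ?_).trans (lintegral_mono fun l => ?_)
    · refine (hm.comp measurable_snd).mul (meas2 hA (by fun_prop) (by fun_prop))
    · have m1 : Measurable (fun z => A z (ζ - ψ l)) :=
        meas2 hA (by fun_prop) (by fun_prop)
      rw [lq_const_mul hQ1 (f := fun z => A (z + φ l) (ζ - ψ l)) (m1.comp (measurable_add_const _)),
        lq_comp m1 (measurePreserving_add_right volume (φ l))]
  refine (lq_mono e).trans ?_
  rw [← lintegral_mul_const _ hm]
  refine (lq_minkowski h1 ?_).trans (lintegral_mono fun l => ?_)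
  · exact (hm.comp measurable_snd).mul (mN.comp (by fun_prop))
  · rw [lq_const_mul h1 (f := fun ζ => lqNorm volume Q (fun z => A z (ζ - ψ l)))
      (mN.comp (measurable_sub_const _))]
    rw [lq_comp mN (measurePreserving_sub_right volume (ψ l))]

lemma holderE {ι : Type*} [Fintype ι] {p : ℝ≥0∞} (hp : 1 ≤ p)
    {ρ h : EuclideanSpace ℝ ι → ℝ≥0∞} (hρ : Measurable ρ) (hh : Measurable h)
    (hρ1 : ∀ y, ρ y ≤ 1) :
    ∫⁻ y, ρ y * h y ≤ (1 + ∫⁻ y, ρ y) * lqNorm volume p h := by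
  by_cases hpt : p = ∞
  · subst hpt
    calc _ ≤ ∫⁻ y, ρ y * lqNorm volume ∞ h := by
          refine lintegral_mono_ae ?_
          rw [lq_top]
          filter_upwards [ENNReal.ae_le_essSup (μ := volume) h] with x hx
          gcongr
      _ = (∫⁻ y, ρ y) * lqNorm volume ∞ h := lintegral_mul_const _ hρ
      _ ≤ _ := by gcongr; exact le_add_self
  · have h0 := toReal_pos_of hp hpt
    have h1' : 1 ≤ p.toReal := by
      rw [← ENNReal.toReal_one]; exact ENNReal.toReal_mono hpt hp
    have hle : 1 / p.toReal ≤ 1 := by rw [div_le_one h0]; exact h1'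
    rw [lq_fin _ hpt]
    calc _ ≤ ∫⁻ y, (h y ^ p.toReal) ^ (1 / p.toReal) * ρ y ^ (1 - 1 / p.toReal) := by
          refine lintegral_mono fun y => ?_
          rw [← ENNReal.rpow_mul, mul_one_div, div_self h0.ne', ENNReal.rpow_one, mul_comm]
          gcongr
          conv_lhs => rw [← ENNReal.rpow_one (ρ y)]
          exact ENNReal.rpow_le_rpow_of_exponent_ge (hρ1 y) (by linarith [one_div_pos.mpr h0])
      _ ≤ (∫⁻ y, h y ^ p.toReal) ^ (1 / p.toReal) * (∫⁻ y, ρ y) ^ (1 - 1 / p.toReal) :=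
          ENNReal.lintegral_mul_norm_pow_le (hh.pow_const _).aemeasurable hρ.aemeasurable
            (by positivity) (by linarith) (by ring)
      _ ≤ _ := by
          rw [mul_comm]
          gcongr
          calc (∫⁻ y, ρ y) ^ (1 - 1 / p.toReal) ≤ (1 + ∫⁻ y, ρ y) ^ (1 - 1 / p.toReal) := by
                gcongr
                exact le_add_self
            _ ≤ (1 + ∫⁻ y, ρ y) ^ (1 : ℝ) := by
                apply ENNReal.rpow_le_rpow_of_exponent_le
                · exact le_self_add
                · linarith [one_div_pos.mpr h0]
            _ = _ := by simp

lemma normD {ι : Type*} [Fintype ι] {p q Q : ℝ≥0∞} (h1 : 1 ≤ q) (hqt : q ≠ ∞) (hp1 : 1 ≤ p)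
    (hpQ : p ≤ Q)
    {A : EuclideanSpace ℝ ι → EuclideanSpace ℝ ι → ℝ≥0∞} (hA : Measurable (Function.uncurry A))
    {ρ : EuclideanSpace ℝ ι → ℝ≥0∞} (hρ : Measurable ρ) (hρ1 : ∀ y, ρ y ≤ 1) (c : ℝ≥0∞)
    (hrep : ∀ z ζ, A z ζ ≤ c * ∫⁻ θ, ∫⁻ y, ρ θ * (ρ y * A (z + y) (ζ - θ))) :
    lqNorm volume q (fun ζ => lqNorm volume Q (fun z => A z ζ)) ≤
      (1 + c * (1 + ∫⁻ y, ρ y) * ∫⁻ y, ρ y) *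
        lqNorm volume q (fun ζ => lqNorm volume p (fun z => A z ζ)) := by
  set B0 := fun ζ => lqNorm volume p (fun z => A z ζ) with hB0
  have mB0 : Measurable B0 := lq_meas p hA
  set c' := c * (1 + ∫⁻ y, ρ y) with hc'
  set B := fun ζ => c' * ∫⁻ θ, ρ θ * B0 (ζ - θ) with hB
  have mB1 : Measurable (Function.uncurry fun ζ θ => ρ θ * B0 (ζ - θ)) :=
    (hρ.comp measurable_snd).mul (mB0.comp (by fun_prop))
  have mB2 : Measurable fun ζ => ∫⁻ θ, ρ θ * B0 (ζ - θ) := mB1.lintegral_prod_right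
  have mB : Measurable B := mB2.const_mul _
  have hAB : ∀ z ζ, A z ζ ≤ B ζ := by
    intro z ζ
    refine (hrep z ζ).trans ?_
    simp only [hB, hc']
    have m0 : Measurable (fun θ => ρ θ * B0 (ζ - θ)) := mB1.comp measurable_prodMk_left
    rw [mul_assoc, ← lintegral_const_mul _ m0]
    gcongr with θ
    have m1 : Measurable (fun y => A y (ζ - θ)) := meas2 hA (by fun_prop) (by fun_prop)
    have m2 : Measurable (fun y => A (z + y) (ζ - θ)) := m1.comp (measurable_const_add z)
    have m3 : Measurable (fun y => ρ y * A (z + y) (ζ - θ)) := hρ.mul m2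
    rw [lintegral_const_mul _ m3]
    rw [mul_left_comm]
    gcongr
    refine (holderE hp1 hρ m2 hρ1).trans ?_
    rw [lq_comp m1 (measurePreserving_add_left volume z)]
  have hAs : ∀ ζ, lqNorm volume Q (fun z => A z ζ) ≤ (B0 + B) ζ := by
    intro ζ
    simp only [Pi.add_apply]
    by_cases hQ : Q = ∞
    · subst hQ
      rw [lq_top]
      refine (essSup_le_of_ae_le (B ζ) (ae_of_all _ fun z => hAB z ζ)).trans le_add_self
    · have hpt := ne_top_of_le_ne_top hQ hpQ
      have p0 := toReal_pos_of hp1 hpt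
      have hQ1 := hp1.trans hpQ
      have Q0 := toReal_pos_of hQ1 hQ
      have hpQ' : p.toReal ≤ Q.toReal := ENNReal.toReal_mono hQ hpQ
      have mz : Measurable (fun z => A z ζ) := meas2 hA (by fun_prop) (by fun_prop)
      rw [← ENNReal.rpow_le_rpow_iff Q0, lq_fin_pow _ hQ1 hQ]
      calc _ ≤ ∫⁻ z, A z ζ ^ p.toReal * B ζ ^ (Q.toReal - p.toReal) := by
            refine lintegral_mono fun z => ?_
            have : A z ζ ^ Q.toReal = A z ζ ^ p.toReal * A z ζ ^ (Q.toReal - p.toReal) := by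
              rw [← ENNReal.rpow_add_of_nonneg _ _ p0.le (by linarith)]; simp
            simp only
            rw [this]
            gcongr
            exact hAB z ζ
        _ = B0 ζ ^ p.toReal * B ζ ^ (Q.toReal - p.toReal) := by
            rw [lintegral_mul_const _ (mz.pow_const _), ← lq_fin_pow _ hp1 hpt]
        _ ≤ (B0 ζ + B ζ) ^ p.toReal * (B0 ζ + B ζ) ^ (Q.toReal - p.toReal) := by
            gcongr
            · exact le_self_add
            · exact le_add_self
        _ = _ := by
            rw [← ENNReal.rpow_add_of_nonneg _ _ p0.le (by linarith)]; simp
  refine (lq_mono hAs).trans ?_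
  have hBn : lqNorm volume q B ≤ c' * (∫⁻ y, ρ y) * lqNorm volume q B0 := by
    rw [hB, lq_const_mul h1 mB2, mul_assoc c']
    refine mul_le_mul' le_rfl ?_
    refine (lq_minkowski h1 mB1).trans ?_
    rw [← lintegral_mul_const _ hρ]
    refine lintegral_mono fun θ => ?_
    have m3 : Measurable (fun ζ => B0 (ζ - θ)) := mB0.comp (measurable_sub_const _)
    rw [lq_const_mul h1 m3, lq_comp mB0 (measurePreserving_sub_right volume θ)]
  have hadd : lqNorm volume q (B0 + B) ≤ lqNorm volume q B0 + lqNorm volume q B := by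
    simp only [lq_fin _ hqt]
    refine ENNReal.lintegral_Lp_add_le mB0.aemeasurable mB.aemeasurable ?_
    rw [← ENNReal.toReal_one]; exact ENNReal.toReal_mono hqt h1
  refine hadd.trans ?_
  rw [add_mul, one_mul]
  gcongr

def ee (x : ℝ) : ℂ := Complex.exp (Complex.I * (2 * Real.pi * x))

lemma ee_add (x y : ℝ) : ee (x + y) = ee x * ee y := by
  unfold ee; rw [← Complex.exp_add]; congr 1; push_cast; ring

lemma ee_zero : ee 0 = 1 := by simp [ee]

lemma norm_ee (x : ℝ) : ‖ee x‖ = 1 := by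
  have : ee x = Complex.exp ((2 * Real.pi * x : ℝ) * Complex.I) := by
    unfold ee; congr 1; push_cast; ring
  rw [this, Complex.norm_exp_ofReal_mul_I]

lemma enorm_ee (x : ℝ) : ‖ee x‖ₑ = 1 := by
  rw [← ofReal_norm, norm_ee]; simp

@[fun_prop] lemma continuous_ee : Continuous ee := by unfold ee; fun_prop

/-- Real Gaussian with parameter `b`. -/
def gb {V : Type*} [NormedAddCommGroup V] (b : ℝ) (t : V) : ℝ := Real.exp (-(b * ‖t‖ ^ 2))

lemma gb_pos {V : Type*} [NormedAddCommGroup V] (b : ℝ) (t : V) : 0 < gb b t := Real.exp_pos _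

lemma gb_le {V : Type*} [NormedAddCommGroup V] {b : ℝ} (hb : 0 ≤ b) (t : V) : gb b t ≤ 1 := by
  unfold gb; rw [Real.exp_le_one_iff]; have := mul_nonneg hb (sq_nonneg ‖t‖); linarith

@[fun_prop] lemma continuous_gb {V : Type*} [NormedAddCommGroup V] (b : ℝ) :
    Continuous (gb b : V → ℝ) := by unfold gb; fun_prop

lemma gb_sub_comm {V : Type*} [NormedAddCommGroup V] (b : ℝ) (x y : V) :
    gb b (x - y) = gb b (y - x) := by unfold gb; rw [norm_sub_rev]

lemma norm_gb {V : Type*} [NormedAddCommGroup V] (b : ℝ) (t : V) : ‖(gb b t : ℂ)‖ = gb b t := by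
  rw [Complex.norm_real, Real.norm_of_nonneg (gb_pos b t).le]

section
variable {ι : Type*} [Fintype ι]

lemma gauss_int {b : ℝ} (hb : 0 < b) (w : EuclideanSpace ℝ ι) :
    ∫ v : EuclideanSpace ℝ ι, (gb b v : ℂ) * ee (inner ℝ v w) =
      ((Real.pi / b : ℝ) : ℂ) ^ ((Fintype.card ι : ℂ) / 2) * gb (Real.pi ^ 2 / b) w := by
  have h := GaussianFourier.integral_cexp_neg_mul_sq_norm_add (V := EuclideanSpace ℝ ι) (b := (b : ℂ))
    (by simpa using hb) (Complex.I * (2 * Real.pi)) w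
  have e1 : ∀ v : EuclideanSpace ℝ ι, (gb b v : ℂ) * ee (inner ℝ v w) =
      cexp (-(b:ℂ) * ‖v‖ ^ 2 + (Complex.I * (2 * Real.pi)) * (inner ℝ w v : ℝ)) := by
    intro v
    unfold gb ee
    rw [Complex.ofReal_exp, ← Complex.exp_add, real_inner_comm]
    congr 1; push_cast; ring
  simp_rw [e1]
  rw [h, finrank_euclideanSpace]
  congr 1
  · push_cast; rfl
  · unfold gb
    rw [Complex.ofReal_exp]
    congr 1
    have : (b : ℂ) ≠ 0 := by exact_mod_cast hb.ne'
    push_cast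
    field_simp
    rw [Complex.I_sq]; ring

lemma gauss_integrable {b : ℝ} (hb : 0 < b) :
    Integrable (fun v : EuclideanSpace ℝ ι => gb b v) := by
  have h := GaussianFourier.integrable_cexp_neg_mul_sq_norm_add (V := EuclideanSpace ℝ ι) (b := (b : ℂ))
    (by simpa using hb) 0 0
  refine h.norm.congr (ae_of_all _ fun v => ?_)
  simp only
  rw [← norm_gb]
  congr 1
  unfold gb
  rw [Complex.ofReal_exp]
  congr 1; push_cast; simp

/-- standard Gaussian -/
lemma gauss_pi (w : EuclideanSpace ℝ ι) :
    ∫ v : EuclideanSpace ℝ ι, (gb Real.pi v : ℂ) * ee (inner ℝ v w) = gb Real.pi w := by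
  rw [gauss_int Real.pi_pos]
  have : Real.pi ^ 2 / Real.pi = Real.pi := by field_simp
  rw [this, div_self Real.pi_ne_zero]; simp

lemma gaussWin_eq (t : EuclideanSpace ℝ ι) : gaussWin t = (gb Real.pi t : ℂ) := by
  unfold gaussWin gb; push_cast; rfl

lemma STFT_eq (F : EuclideanSpace ℝ ι → ℂ) (x ω : EuclideanSpace ℝ ι) :
    STFT F x ω = ∫ t, F t * gb Real.pi (t - x) * ee (-(inner ℝ ω t)) := by
  unfold STFT
  congr 1; ext t
  rw [gaussWin_eq, Complex.conj_ofReal]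
  congr 1
  unfold ee; congr 1; push_cast; ring

lemma int_dom {α : Type*} [MeasurableSpace α] {μ : Measure α} {f : α → ℂ} {g : α → ℝ}
    (hg : Integrable g μ) (hf : AEStronglyMeasurable f μ) (h : ∀ x, ‖f x‖ ≤ g x) : Integrable f μ :=
  hg.mono' hf (ae_of_all _ h)

lemma STFT_meas {F : EuclideanSpace ℝ ι → ℂ} (hF : Continuous F) :
    StronglyMeasurable (Function.uncurry (STFT F)) := by
  have : (Function.uncurry (STFT F)) = fun p : EuclideanSpace ℝ ι × EuclideanSpace ℝ ι =>
      ∫ t, F t * gb Real.pi (t - p.1) * ee (-(inner ℝ p.2 t)) := by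
    ext p; exact STFT_eq _ _ _
  rw [this]
  refine StronglyMeasurable.integral_prod_right (f := fun (p : EuclideanSpace ℝ ι × EuclideanSpace ℝ ι) t =>
    F t * gb Real.pi (t - p.1) * ee (-(inner ℝ p.2 t))) ?_
  apply Continuous.stronglyMeasurable
  unfold Function.uncurry
  fun_prop

lemma STFT_meas' {F : EuclideanSpace ℝ ι → ℂ} (hF : Continuous F) :
    Measurable (Function.uncurry fun x ω => (‖STFT F x ω‖₊ : ℝ≥0∞)) :=
  (STFT_meas hF).enorm

lemma gb_mul_id (u y : EuclideanSpace ℝ ι) :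
    gb Real.pi (u - y) * gb (Real.pi / 2) y * gb (2 * Real.pi) (u - (2:ℝ)⁻¹ • y) =
      gb Real.pi u * gb (2 * Real.pi) (u - y) := by
  unfold gb
  rw [← Real.exp_add, ← Real.exp_add, ← Real.exp_add]
  congr 1
  simp only [@norm_sub_sq_real, norm_smul, inner_smul_right]
  norm_num
  ring

lemma gauss_pos {b : ℝ} (hb : 0 < b) : 0 < ∫ v : EuclideanSpace ℝ ι, gb b v := by
  rw [integral_pos_iff_support_of_nonneg (fun v => (gb_pos b v).le) (gauss_integrable hb)]
  have : Function.support (fun v : EuclideanSpace ℝ ι => gb b v) = Set.univ := by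
    ext v; simp [(gb_pos b v).ne']
  rw [this]
  exact isOpen_univ.measure_pos _ Set.univ_nonempty

lemma gauss_lint {b : ℝ} (hb : 0 < b) :
    ∫⁻ v : EuclideanSpace ℝ ι, ENNReal.ofReal (gb b v) ≠ ∞ := by
  rw [← ofReal_integral_eq_lintegral_ofReal (gauss_integrable hb) (ae_of_all _ fun v => (gb_pos b v).le)]
  exact ENNReal.ofReal_ne_top

lemma integral_swap_neg (f : EuclideanSpace ℝ ι → ℂ) (t : EuclideanSpace ℝ ι) :
    ∫ y, f (t - y) = ∫ y, f y := integral_sub_left_eq_self f volume t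
end

lemma le_inv_mul_of {k a b : ℝ≥0∞} (hk : k ≠ 0) (hk2 : k ≠ ∞) (h : k * a ≤ b) : a ≤ k⁻¹ * b := by
  calc a = k⁻¹ * (k * a) := by rw [← mul_assoc, ENNReal.inv_mul_cancel hk hk2, one_mul]
    _ ≤ _ := by gcongr

section
variable {ι : Type*} [Fintype ι]

/-- constant -/
def kc (ι : Type*) [Fintype ι] : ℂ :=
  ((Real.pi / (Real.pi / 2) : ℝ) : ℂ) ^ ((Fintype.card ι : ℂ) / 2) *
    ((∫ v : EuclideanSpace ℝ ι, gb (2 * Real.pi) v : ℝ) : ℂ)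

lemma kc_ne (ι : Type*) [Fintype ι] : kc ι ≠ 0 := by
  unfold kc
  refine mul_ne_zero ?_ ?_
  · rw [Complex.cpow_ne_zero_iff]
    left
    have : Real.pi / (Real.pi / 2) ≠ 0 := by have := Real.pi_pos; positivity
    exact_mod_cast this
  · exact_mod_cast (gauss_pos (by have := Real.pi_pos; positivity)).ne'

def Phi2 (a : EuclideanSpace ℝ ι → ℂ) (z ζ : EuclideanSpace ℝ ι) (t : EuclideanSpace ℝ ι)
    (l : EuclideanSpace ℝ ι × EuclideanSpace ℝ ι) : ℂ :=
  a t * ee (-(inner ℝ ζ t)) * ((gb Real.pi (t - z - l.2) * gb (Real.pi / 2) l.2) *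
    (gb (Real.pi / 2) l.1 * ee (inner ℝ l.1 (t - z - (2:ℝ)⁻¹ • l.2))))

lemma Phi2_bound (a : EuclideanSpace ℝ ι → ℂ) (z ζ : EuclideanSpace ℝ ι) (t : EuclideanSpace ℝ ι)
    (l : EuclideanSpace ℝ ι × EuclideanSpace ℝ ι) :
    ‖Phi2 a z ζ t l‖ ≤ ‖a t‖ * (gb (Real.pi / 2) l.1 * gb (Real.pi / 2) l.2) := by
  unfold Phi2
  simp only [norm_mul, norm_ee, norm_gb, mul_one]
  have h1 := gb_le Real.pi_pos.le (t - z - l.2)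
  have h2 := gb_pos (Real.pi/2) l.1
  have h3 := gb_pos (Real.pi/2) l.2
  rw [mul_comm (gb (Real.pi/2) l.1)]
  gcongr
  exact mul_le_of_le_one_left h3.le h1

lemma Phi2_cont {a : EuclideanSpace ℝ ι → ℂ} (ha : Continuous a) (z ζ : EuclideanSpace ℝ ι) :
    Continuous (Function.uncurry (Phi2 a z ζ)) := by
  unfold Phi2 Function.uncurry
  fun_prop

lemma rho_integrable2 : Integrable (fun l : EuclideanSpace ℝ ι × EuclideanSpace ℝ ι =>
    gb (Real.pi / 2) l.1 * gb (Real.pi / 2) l.2) (volume.prod volume) :=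
  (gauss_integrable (by have := Real.pi_pos; positivity)).mul_prod
    (gauss_integrable (by have := Real.pi_pos; positivity))

lemma Phi2_int_l {a : EuclideanSpace ℝ ι → ℂ} (ha : Continuous a) (z ζ t : EuclideanSpace ℝ ι) :
    ∫ l, Phi2 a z ζ t l ∂(volume.prod volume) =
      kc ι * (a t * gb Real.pi (t - z) * ee (-(inner ℝ ζ t))) := by
  have hp := Real.pi_pos
  have hI : Integrable (Phi2 a z ζ t) (volume.prod volume) := by
    refine int_dom (rho_integrable2.const_mul ‖a t‖) ?_ (Phi2_bound a z ζ t)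
    exact ((Phi2_cont ha z ζ).comp (Continuous.prodMk_right t)).aestronglyMeasurable
  rw [integral_prod_symm _ hI]
  have e1 : ∀ y, ∫ θ, Phi2 a z ζ t (θ, y) =
      (((Real.pi / (Real.pi / 2) : ℝ) : ℂ) ^ ((Fintype.card ι : ℂ) / 2) *
        (a t * gb Real.pi (t - z) * ee (-(inner ℝ ζ t)))) * (gb (2 * Real.pi) (t - z - y) : ℝ) := by
    intro y
    simp only [Phi2]
    rw [integral_const_mul, integral_const_mul, gauss_int (by positivity)]
    have h := gb_mul_id (t - z) y
    have e : Real.pi ^ 2 / (Real.pi / 2) = 2 * Real.pi := by field_simp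
    rw [e]
    have h' : ((gb Real.pi (t - z - y) : ℂ) * gb (Real.pi / 2) y * gb (2 * Real.pi) (t - z - (2:ℝ)⁻¹ • y)) =
      gb Real.pi (t - z) * gb (2 * Real.pi) (t - z - y) := by exact_mod_cast h
    linear_combination (((Real.pi / (Real.pi / 2) : ℝ) : ℂ) ^ ((Fintype.card ι : ℂ) / 2) * (a t * ee (-(inner ℝ ζ t)))) * h'
  simp_rw [e1]
  rw [integral_const_mul, integral_sub_left_eq_self (fun y => ((gb (2 * Real.pi) y : ℝ) : ℂ)),
    integral_complex_ofReal]
  unfold kc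
  ring

lemma Phi2_int_t (a : EuclideanSpace ℝ ι → ℂ) (z ζ : EuclideanSpace ℝ ι)
    (l : EuclideanSpace ℝ ι × EuclideanSpace ℝ ι) :
    ∫ t, Phi2 a z ζ t l = (gb (Real.pi / 2) l.2 * gb (Real.pi / 2) l.1 *
      ee (-(inner ℝ l.1 (z + (2:ℝ)⁻¹ • l.2)))) * STFT a (z + l.2) (ζ - l.1) := by
  rw [STFT_eq, ← integral_const_mul]
  congr 1; ext t
  unfold Phi2
  have h : ee (-(inner ℝ ζ t)) * ee (inner ℝ l.1 (t - z - (2:ℝ)⁻¹ • l.2)) =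
      ee (-(inner ℝ l.1 (z + (2:ℝ)⁻¹ • l.2))) * ee (-(inner ℝ (ζ - l.1) t)) := by
    rw [← ee_add, ← ee_add]; congr 1
    simp only [inner_sub_left, inner_sub_right, inner_add_right]; ring
  rw [sub_sub]
  linear_combination (a t * gb Real.pi (t - (z + l.2)) * gb (Real.pi / 2) l.2 * gb (Real.pi / 2) l.1) * h

lemma stft_rep (a : SchwartzMap (EuclideanSpace ℝ ι) ℂ) (z ζ : EuclideanSpace ℝ ι) :
    (‖STFT a z ζ‖₊ : ℝ≥0∞) ≤ ‖kc ι‖ₑ⁻¹ * ∫⁻ θ, ∫⁻ y, ENNReal.ofReal (gb (Real.pi / 2) θ) *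
      (ENNReal.ofReal (gb (Real.pi / 2) y) * (‖STFT a (z + y) (ζ - θ)‖₊ : ℝ≥0∞)) := by
  have hI : Integrable (Function.uncurry (Phi2 a z ζ)) (volume.prod (volume.prod volume)) := by
    refine int_dom (a.integrable.norm.mul_prod rho_integrable2)
      (Phi2_cont a.continuous z ζ).aestronglyMeasurable (fun p => Phi2_bound a z ζ p.1 p.2)
  have h := integral_integral_swap hI
  simp_rw [Phi2_int_l a.continuous, Phi2_int_t] at h
  rw [integral_const_mul, ← STFT_eq] at h
  have hk : ‖kc ι‖ₑ ≠ 0 := by simpa using kc_ne ι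
  refine le_inv_mul_of hk enorm_ne_top ?_
  change ‖kc ι‖ₑ * ‖STFT a z ζ‖ₑ ≤ _
  rw [← enorm_mul, h]
  refine (enorm_integral_le_lintegral_enorm _).trans ?_
  have m := STFT_meas' a.continuous
  rw [lintegral_prod]
  · refine lintegral_mono fun θ => lintegral_mono fun y => ?_
    simp only [enorm_mul, enorm_ee, mul_one]
    rw [← ofReal_norm, ← ofReal_norm, norm_gb, norm_gb, mul_comm (ENNReal.ofReal (gb (Real.pi / 2) y)), mul_assoc]
    rfl
  · refine AEMeasurable.enorm ?_
    refine AEMeasurable.mul ?_ ?_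
    · apply Continuous.aemeasurable
      fun_prop
    · exact ((STFT_meas a.continuous).measurable.comp (by fun_prop :
        Measurable (fun l : EuclideanSpace ℝ ι × EuclideanSpace ℝ ι => (z + l.2, ζ - l.1)))).aemeasurable
end

section
variable {ι : Type*} [Fintype ι]

def Rk (t τ : EuclideanSpace ℝ ι) (l : EuclideanSpace ℝ ι × EuclideanSpace ℝ ι) : ℂ :=
  (gb (Real.pi / 2) l.1 * ee (inner ℝ l.1 τ) * gb Real.pi (t - (2:ℝ)⁻¹ • l.1)) *
    (gb Real.pi l.2 * ee (inner ℝ l.2 (t - (2:ℝ)⁻¹ • l.1)))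

lemma Rk_bound (t τ : EuclideanSpace ℝ ι) (l : EuclideanSpace ℝ ι × EuclideanSpace ℝ ι) :
    ‖Rk t τ l‖ ≤ gb (Real.pi / 2) l.1 * gb Real.pi l.2 := by
  unfold Rk
  simp only [norm_mul, norm_ee, norm_gb, mul_one]
  have h1 := gb_le Real.pi_pos.le (t - (2:ℝ)⁻¹ • l.1)
  have h2 := gb_pos (Real.pi/2) l.1
  have h3 := gb_pos (Real.pi) l.2
  gcongr
  exact mul_le_of_le_one_right h2.le h1

lemma rho_integrable3 : Integrable (fun l : EuclideanSpace ℝ ι × EuclideanSpace ℝ ι =>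
    gb (Real.pi / 2) l.1 * gb Real.pi l.2) (volume.prod volume) :=
  (gauss_integrable (by have := Real.pi_pos; positivity)).mul_prod
    (gauss_integrable Real.pi_pos)

lemma gb_mul_id2 (t s : EuclideanSpace ℝ ι) :
    gb (Real.pi / 2) s * gb Real.pi (t - (2:ℝ)⁻¹ • s) * gb Real.pi (t - (2:ℝ)⁻¹ • s) =
      gb Real.pi t * gb Real.pi (s - t) := by
  unfold gb
  rw [← Real.exp_add, ← Real.exp_add, ← Real.exp_add]
  congr 1
  simp only [@norm_sub_sq_real, norm_smul, inner_smul_right]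
  rw [real_inner_comm s t]
  norm_num
  ring

lemma Rk_int (t τ : EuclideanSpace ℝ ι) :
    ∫ l, Rk t τ l ∂(volume.prod volume) = gb Real.pi t * gb Real.pi τ * ee (inner ℝ t τ) := by
  have hI : Integrable (Rk t τ) (volume.prod volume) := by
    refine int_dom rho_integrable3 (Continuous.aestronglyMeasurable ?_) (Rk_bound t τ)
    unfold Rk; fun_prop
  rw [integral_prod _ hI]
  have e1 : ∀ s, ∫ θ, Rk t τ (s, θ) = gb Real.pi t * ee (inner ℝ t τ) *
      (gb Real.pi (s - t) * ee (inner ℝ (s - t) τ)) := by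
    intro s
    simp only [Rk]
    rw [integral_const_mul, gauss_pi]
    have h : ((gb (Real.pi / 2) s : ℂ) * gb Real.pi (t - (2:ℝ)⁻¹ • s) * gb Real.pi (t - (2:ℝ)⁻¹ • s)) =
      gb Real.pi t * gb Real.pi (s - t) := by exact_mod_cast gb_mul_id2 t s
    have h2 : ee (inner ℝ s τ) = ee (inner ℝ t τ) * ee (inner ℝ (s - t) τ) := by
      rw [← ee_add]; congr 1; rw [inner_sub_left]; ring
    rw [h2]
    linear_combination (ee (inner ℝ t τ) * ee (inner ℝ (s - t) τ)) * h
  simp_rw [e1]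
  rw [integral_const_mul, integral_sub_right_eq_self
    (fun s : EuclideanSpace ℝ ι => (gb Real.pi s : ℂ) * ee (inner ℝ s τ)), gauss_pi]
  ring

/-- Envelope of the STFT -/
def Nf (f : EuclideanSpace ℝ ι → ℂ) (u : EuclideanSpace ℝ ι) : ℝ := ∫ y, ‖f y‖ * gb Real.pi (y - u)

lemma conv_integrable (f : SchwartzMap (EuclideanSpace ℝ ι) ℂ) :
    Integrable (fun p : EuclideanSpace ℝ ι × EuclideanSpace ℝ ι => ‖f p.2‖ * gb Real.pi (p.2 - p.1))
      (volume.prod volume) := by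
  rw [integrable_prod_iff']
  · constructor
    · refine ae_of_all _ fun y => ?_
      exact ((gauss_integrable Real.pi_pos).comp_sub_left y).const_mul ‖f y‖
    · have : ∀ y : EuclideanSpace ℝ ι, ∫ x, ‖‖f y‖ * gb Real.pi (y - x)‖ = ‖f y‖ * ∫ x : EuclideanSpace ℝ ι, gb Real.pi x := by
        intro y
        simp_rw [norm_mul, norm_norm, Real.norm_of_nonneg (gb_pos _ _).le]
        rw [integral_const_mul, integral_sub_left_eq_self (fun x : EuclideanSpace ℝ ι => gb Real.pi x)]
      simp_rw [this]
      exact f.integrable.norm.mul_const _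
  · have := f.continuous
    apply Continuous.aestronglyMeasurable; fun_prop

lemma Nf_integrable (f : SchwartzMap (EuclideanSpace ℝ ι) ℂ) : Integrable (Nf f) :=
  (conv_integrable f).integral_prod_left

lemma STFT_le_Nf (f : EuclideanSpace ℝ ι → ℂ) (u v : EuclideanSpace ℝ ι) : ‖STFT f u v‖ ≤ Nf f u := by
  rw [STFT_eq]
  refine (norm_integral_le_integral_norm _).trans (le_of_eq ?_)
  unfold Nf
  congr 1; ext y
  simp only [norm_mul, norm_ee, norm_gb, mul_one]

lemma fhat_int (f : SchwartzMap (EuclideanSpace ℝ ι) ℂ) (v τ : EuclideanSpace ℝ ι) :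
    ∫ u, STFT f u v * ee (inner ℝ v u - inner ℝ u τ) = fTrans f τ * gb Real.pi (τ - v) := by
  have hI : Integrable (Function.uncurry fun u y : EuclideanSpace ℝ ι =>
      f y * gb Real.pi (y - u) * ee (-(inner ℝ v y)) * ee (inner ℝ v u - inner ℝ u τ))
      (volume.prod volume) := by
    refine int_dom (conv_integrable f) ?_ ?_
    · have := f.continuous
      apply Continuous.aestronglyMeasurable
      unfold Function.uncurry; fun_prop
    · intro p
      simp only [Function.uncurry, norm_mul, norm_ee, norm_gb, mul_one, le_refl]
  simp_rw [STFT_eq, ← integral_mul_const]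
  rw [integral_integral_swap hI]
  unfold fTrans
  rw [← integral_mul_const]
  congr 1; ext y
  rw [← integral_sub_left_eq_self (fun u => (f y * gb Real.pi (y - u) * ee (-(inner ℝ v y)) * ee (inner ℝ v u - inner ℝ u τ))) volume y]
  have : ∀ u, (f y * gb Real.pi (y - (y - u)) * ee (-(inner ℝ v y)) * ee (inner ℝ v (y - u) - inner ℝ (y - u) τ))
      = f y * ee (-(inner ℝ y τ)) * (gb Real.pi u * ee (inner ℝ u (τ - v))) := by
    intro u
    have h : ee (-(inner ℝ v y)) * ee (inner ℝ v (y - u) - inner ℝ (y - u) τ) =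
        ee (-(inner ℝ y τ)) * ee (inner ℝ u (τ - v)) := by
      rw [← ee_add, ← ee_add]; congr 1
      simp only [inner_sub_left, inner_sub_right]
      rw [real_inner_comm u v]; ring
    rw [_root_.sub_sub_cancel]
    linear_combination (f y * gb Real.pi u) * h
  simp_rw [this]
  rw [integral_const_mul, gauss_pi]
  congr 2
  unfold ee; congr 1; push_cast; ring

lemma gb_cube (t : EuclideanSpace ℝ ι) : gb Real.pi t * gb Real.pi t * gb Real.pi t = gb (3 * Real.pi) t := by
  unfold gb; rw [← Real.exp_add, ← Real.exp_add]; congr 1; ring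
end

section
variable {d : ℕ}

abbrev En (d : ℕ) : Type := EuclideanSpace ℝ (Fin d)

lemma inner_pairE (x y u v : En d) : inner ℝ (pairE x y) (pairE u v) = inner ℝ x u + inner ℝ y v := by
  simp [pairE, PiLp.inner_apply]

lemma pairE_sub (x y u v : En d) : pairE x y - pairE u v = pairE (x - u) (y - v) := by
  ext i; cases i <;> simp [pairE]

lemma pairE_add (x y u v : En d) : pairE x y + pairE u v = pairE (x + u) (y + v) := by
  ext i; cases i <;> simp [pairE]

lemma gb_pairE (b : ℝ) (x y : En d) : gb b (pairE x y) = gb b x * gb b y := by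
  unfold gb
  rw [← Real.exp_add]
  congr 1
  rw [← real_inner_self_eq_norm_sq, ← real_inner_self_eq_norm_sq, ← real_inner_self_eq_norm_sq,
    inner_pairE]
  ring

lemma continuous_pairE : Continuous (fun w : En d × En d => pairE w.1 w.2) := by
  unfold pairE
  refine (PiLp.continuous_toLp 2 _).comp ?_
  refine continuous_pi fun i => ?_
  cases i <;> simp <;> fun_prop

lemma STFT_pair {a : EuclideanSpace ℝ (Fin d ⊕ Fin d) → ℂ} (ha : Continuous a) (x v ξ η : En d) :
    STFT a (pairE x v) (pairE ξ η) = ∫ w : En d × En d, a (pairE w.1 w.2) *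
      (gb Real.pi (w.1 - x) * gb Real.pi (w.2 - v)) * ee (-(inner ℝ ξ w.1 + inner ℝ η w.2))
        ∂(volume.prod volume) := by
  rw [STFT_eq, ← (pairE_mp d).map_eq, integral_map (pairE_mp d).measurable.aemeasurable]
  · congr 1; ext w
    rw [pairE_sub, gb_pairE, inner_pairE]; push_cast; rfl
  · apply Continuous.aestronglyMeasurable; fun_prop

def Phi3 (a : EuclideanSpace ℝ (Fin d ⊕ Fin d) → ℂ) (f : En d → ℂ) (x ω : En d) (w : En d × En d)
    (l : En d × (En d × (En d × En d))) : ℂ :=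
  (a (pairE w.1 w.2) * ee (-(inner ℝ ω w.1) + inner ℝ x w.2)) *
    ((gb Real.pi (w.2 - l.1) * ee (inner ℝ (w.1 - x) l.1)) *
      ((STFT f l.2.1 l.1 * ee (inner ℝ l.1 l.2.1 - inner ℝ l.2.1 w.2)) *
        Rk (w.1 - x) (w.2 - l.1) l.2.2))

def Dom3 (f : En d → ℂ) (τ : En d) (l : En d × (En d × (En d × En d))) : ℝ :=
  gb Real.pi (τ - l.1) * (Nf f l.2.1 * (gb (Real.pi / 2) l.2.2.1 * gb Real.pi l.2.2.2))

lemma Nf_nonneg (f : En d → ℂ) (u : En d) : 0 ≤ Nf f u :=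
  integral_nonneg fun y => mul_nonneg (norm_nonneg _) (gb_pos _ _).le

lemma Dom3_nonneg (f : En d → ℂ) (τ : En d) (l : En d × (En d × (En d × En d))) : 0 ≤ Dom3 f τ l := by
  unfold Dom3
  have := Nf_nonneg f l.2.1
  have := gb_pos Real.pi (τ - l.1)
  have := gb_pos (Real.pi/2) l.2.2.1
  have := gb_pos Real.pi l.2.2.2
  positivity

lemma Phi3_bound (a : EuclideanSpace ℝ (Fin d ⊕ Fin d) → ℂ) (f : En d → ℂ) (x ω : En d) (w : En d × En d)
    (l : En d × (En d × (En d × En d))) : ‖Phi3 a f x ω w l‖ ≤ ‖a (pairE w.1 w.2)‖ * Dom3 f w.2 l := by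
  unfold Phi3 Dom3
  simp only [norm_mul, norm_ee, norm_gb, mul_one]
  have h0 := Nf_nonneg f l.2.1
  have h1 := gb_pos Real.pi (w.2 - l.1)
  have h2 := Rk_bound (w.1 - x) (w.2 - l.1) l.2.2
  have h3 := STFT_le_Nf f l.2.1 l.1
  gcongr

lemma Dom3_integrable (f : SchwartzMap (En d) ℂ) (τ : En d) :
    Integrable (Dom3 f τ) (volume.prod (volume.prod (volume.prod volume))) := by
  have h1 : Integrable (fun v : En d => gb Real.pi (τ - v)) :=
    (gauss_integrable Real.pi_pos).comp_sub_left τ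
  exact h1.mul_prod ((Nf_integrable f).mul_prod rho_integrable3)

lemma Dom3_integral (f : SchwartzMap (En d) ℂ) (τ : En d) :
    ∫ l, Dom3 f τ l ∂(volume.prod (volume.prod (volume.prod volume))) =
    ∫ l, Dom3 f 0 l ∂(volume.prod (volume.prod (volume.prod volume))) := by
  unfold Dom3
  rw [integral_prod_mul (fun v : En d => gb Real.pi (τ - v))
    (fun l : En d × (En d × En d) => Nf f l.1 * (gb (Real.pi / 2) l.2.1 * gb Real.pi l.2.2)),
    integral_prod_mul (fun v : En d => gb Real.pi (0 - v))
    (fun l : En d × (En d × En d) => Nf f l.1 * (gb (Real.pi / 2) l.2.1 * gb Real.pi l.2.2)),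
    integral_sub_left_eq_self (fun v : En d => gb Real.pi v),
    integral_sub_left_eq_self (fun v : En d => gb Real.pi v)]

lemma Nf_meas (f : SchwartzMap (En d) ℂ) : StronglyMeasurable (Nf f) := by
  unfold Nf
  refine StronglyMeasurable.integral_prod_right (f := fun u y : En d => ‖f y‖ * gb Real.pi (y - u)) ?_
  have := f.continuous
  apply Continuous.stronglyMeasurable
  unfold Function.uncurry; fun_prop

lemma a_pair_integrable (a : SchwartzMap (EuclideanSpace ℝ (Fin d ⊕ Fin d)) ℂ) :
    Integrable (fun w : En d × En d => a (pairE w.1 w.2)) (volume.prod volume) := by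
  have := (pairE_mp d).integrable_comp a.integrable.aestronglyMeasurable
  exact this.mpr a.integrable

lemma Dom3_full (a : SchwartzMap (EuclideanSpace ℝ (Fin d ⊕ Fin d)) ℂ) (f : SchwartzMap (En d) ℂ) :
    Integrable (fun p : (En d × En d) × (En d × (En d × (En d × En d))) =>
      ‖a (pairE p.1.1 p.1.2)‖ * Dom3 f p.1.2 p.2)
      ((volume.prod volume).prod (volume.prod (volume.prod (volume.prod volume)))) := by
  rw [integrable_prod_iff]
  · constructor
    · exact ae_of_all _ fun w => (Dom3_integrable f w.2).const_mul ‖a (pairE w.1 w.2)‖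
    · have : ∀ w : En d × En d, ∫ l, ‖‖a (pairE w.1 w.2)‖ * Dom3 f w.2 l‖ ∂(volume.prod (volume.prod (volume.prod volume)))
          = ‖a (pairE w.1 w.2)‖ * ∫ l, Dom3 f 0 l ∂(volume.prod (volume.prod (volume.prod volume))) := by
        intro w
        simp_rw [norm_mul, norm_norm, Real.norm_of_nonneg (Dom3_nonneg _ _ _)]
        rw [integral_const_mul, Dom3_integral]
      simp_rw [this]
      exact (a_pair_integrable a).norm.mul_const _
  · refine StronglyMeasurable.aestronglyMeasurable ?_
    have h1 : Continuous (fun p : (En d × En d) × (En d × (En d × (En d × En d))) => ‖a (pairE p.1.1 p.1.2)‖) :=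
      (a.continuous.comp (continuous_pairE.comp continuous_fst)).norm
    have h2 : Continuous (fun p : (En d × En d) × (En d × (En d × (En d × En d))) => gb Real.pi (p.1.2 - p.2.1)) := by
      fun_prop
    have h3 : Continuous (fun p : (En d × En d) × (En d × (En d × (En d × En d))) =>
      gb (Real.pi / 2) p.2.2.2.1 * gb Real.pi p.2.2.2.2) := by
      fun_prop
    have h4 : StronglyMeasurable (fun p : (En d × En d) × (En d × (En d × (En d × En d))) => Nf f p.2.2.1) :=
      (Nf_meas f).comp_measurable (by fun_prop)
    exact h1.stronglyMeasurable.mul (h2.stronglyMeasurable.mul (h4.mul h3.stronglyMeasurable))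

lemma Phi3_meas (a : SchwartzMap (EuclideanSpace ℝ (Fin d ⊕ Fin d)) ℂ) (f : SchwartzMap (En d) ℂ)
    (x ω : En d) : StronglyMeasurable (Function.uncurry (Phi3 a f x ω)) := by
  have h1 : Continuous (fun p : (En d × En d) × (En d × (En d × (En d × En d))) =>
      a (pairE p.1.1 p.1.2) * ee (-(inner ℝ ω p.1.1) + inner ℝ x p.1.2)) := by
    refine (a.continuous.comp (continuous_pairE.comp continuous_fst)).mul ?_
    fun_prop
  have h2 : Continuous (fun p : (En d × En d) × (En d × (En d × (En d × En d))) =>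
      (gb Real.pi (p.1.2 - p.2.1) : ℂ) * ee (inner ℝ (p.1.1 - x) p.2.1)) := by
    fun_prop
  have h3 : Continuous (fun p : (En d × En d) × (En d × (En d × (En d × En d))) =>
      Rk (p.1.1 - x) (p.1.2 - p.2.1) p.2.2.2) := by
    unfold Rk; fun_prop
  have h5 : Continuous (fun p : (En d × En d) × (En d × (En d × (En d × En d))) =>
      ee (inner ℝ p.2.1 p.2.2.1 - inner ℝ p.2.2.1 p.1.2)) := by
    fun_prop
  have h4 : StronglyMeasurable (fun p : (En d × En d) × (En d × (En d × (En d × En d))) =>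
      STFT f p.2.2.1 p.2.1) :=
    (STFT_meas f.continuous).comp_measurable (g := fun p : (En d × En d) × (En d × (En d × (En d × En d))) =>
      (p.2.2.1, p.2.1)) (by fun_prop)
  exact h1.stronglyMeasurable.mul (h2.stronglyMeasurable.mul
    ((h4.mul h5.stronglyMeasurable).mul h3.stronglyMeasurable))

lemma Phi3_integrable (a : SchwartzMap (EuclideanSpace ℝ (Fin d ⊕ Fin d)) ℂ) (f : SchwartzMap (En d) ℂ)
    (x ω : En d) : Integrable (Function.uncurry (Phi3 a f x ω))
      ((volume.prod volume).prod (volume.prod (volume.prod (volume.prod volume)))) :=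
  int_dom (Dom3_full a f) (Phi3_meas a f x ω).aestronglyMeasurable (fun p => Phi3_bound _ _ _ _ p.1 p.2)
end

section
variable {d : ℕ}

def kc3 (d : ℕ) : ℝ := ∫ v : En d, gb (3 * Real.pi) v

lemma kc3_pos (d : ℕ) : 0 < kc3 d := gauss_pos (by have := Real.pi_pos; positivity)

lemma Phi3_int_l (a : SchwartzMap (EuclideanSpace ℝ (Fin d ⊕ Fin d)) ℂ) (f : SchwartzMap (En d) ℂ)
    (x ω : En d) (w : En d × En d) :
    ∫ l, Phi3 a f x ω w l ∂(volume.prod (volume.prod (volume.prod volume))) =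
      kc3 d * (a (pairE w.1 w.2) * fTrans f w.2 * ee (inner ℝ w.1 w.2) * gb Real.pi (w.1 - x) *
        ee (-(inner ℝ ω w.1))) := by
  have hI : Integrable (Phi3 a f x ω w) (volume.prod (volume.prod (volume.prod volume))) := by
    refine int_dom ((Dom3_integrable f w.2).const_mul ‖a (pairE w.1 w.2)‖) ?_ (Phi3_bound a f x ω w)
    exact ((Phi3_meas a f x ω).comp_measurable (measurable_prodMk_left (x := w))).aestronglyMeasurable
  rw [integral_prod _ hI]
  have e1 : ∀ v : En d, ∫ l, Phi3 a f x ω w (v, l) ∂(volume.prod (volume.prod volume)) =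
      (a (pairE w.1 w.2) * fTrans f w.2 * ee (inner ℝ w.1 w.2) * gb Real.pi (w.1 - x) *
        ee (-(inner ℝ ω w.1))) * (gb (3 * Real.pi) (w.2 - v) : ℝ) := by
    intro v
    simp only [Phi3]
    rw [integral_const_mul, integral_const_mul,
      integral_prod_mul (fun u => STFT f u v * ee (inner ℝ v u - inner ℝ u w.2))
        (Rk (w.1 - x) (w.2 - v)), fhat_int, Rk_int, ← gb_cube]
    push_cast
    have h : ee (-(inner ℝ ω w.1) + inner ℝ x w.2) * ee (inner ℝ (w.1 - x) v) * ee (inner ℝ (w.1 - x) (w.2 - v)) =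
        ee (inner ℝ w.1 w.2) * ee (-(inner ℝ ω w.1)) := by
      rw [← ee_add, ← ee_add, ← ee_add]; congr 1
      simp only [inner_sub_left, inner_sub_right]; ring
    linear_combination (a (pairE w.1 w.2) * gb Real.pi (w.2 - v) * fTrans f w.2 * gb Real.pi (w.2 - v) *
      gb Real.pi (w.1 - x) * gb Real.pi (w.2 - v)) * h
  simp_rw [e1]
  rw [integral_const_mul, integral_sub_left_eq_self (fun y : En d => ((gb (3 * Real.pi) y : ℝ) : ℂ)),
    integral_complex_ofReal, mul_comm]
  rfl

lemma Phi3_int_w (a : SchwartzMap (EuclideanSpace ℝ (Fin d ⊕ Fin d)) ℂ) (f : SchwartzMap (En d) ℂ)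
    (x ω v u s θ : En d) :
    ‖∫ w, Phi3 a f x ω w (v, (u, (s, θ))) ∂(volume.prod volume)‖ₑ =
      ‖STFT f u v‖ₑ * ((ENNReal.ofReal (gb (Real.pi / 2) s) * ENNReal.ofReal (gb Real.pi θ)) *
        ‖STFT a (pairE (x + (2:ℝ)⁻¹ • s) v) (pairE (ω - v - θ) (u - x - s))‖ₑ) := by
  have e : ∫ w, Phi3 a f x ω w (v, (u, (s, θ))) ∂(volume.prod volume) =
      (STFT f u v * ((gb (Real.pi / 2) s : ℂ) * (gb Real.pi θ : ℂ)) *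
        ee (-(inner ℝ x v) + inner ℝ v u - inner ℝ s v - inner ℝ θ (x + (2:ℝ)⁻¹ • s))) *
        STFT a (pairE (x + (2:ℝ)⁻¹ • s) v) (pairE (ω - v - θ) (u - x - s)) := by
    rw [STFT_pair a.continuous, ← integral_const_mul]
    congr 1; ext w
    simp only [Phi3, Rk]
    have h : ee (-(inner ℝ ω w.1) + inner ℝ x w.2) * ee (inner ℝ (w.1 - x) v) *
        ee (inner ℝ v u - inner ℝ u w.2) * ee (inner ℝ s (w.2 - v)) *
        ee (inner ℝ θ (w.1 - x - (2:ℝ)⁻¹ • s)) =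
        ee (-(inner ℝ x v) + inner ℝ v u - inner ℝ s v - inner ℝ θ (x + (2:ℝ)⁻¹ • s)) *
        ee (-(inner ℝ (ω - v - θ) w.1 + inner ℝ (u - x - s) w.2)) := by
      simp only [← ee_add]; congr 1
      simp only [inner_sub_left, inner_sub_right, inner_add_right]
      rw [real_inner_comm v w.1]
      ring
    rw [sub_sub w.1 x]
    rw [sub_sub w.1 x] at h
    linear_combination (a (pairE w.1 w.2) * gb Real.pi (w.2 - v) * STFT f u v * gb (Real.pi / 2) s *
      gb Real.pi (w.1 - (x + (2:ℝ)⁻¹ • s)) * gb Real.pi θ) * h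
  rw [e]
  simp only [enorm_mul, enorm_ee, mul_one]
  rw [← ofReal_norm (gb (Real.pi / 2) s : ℂ), ← ofReal_norm (gb Real.pi θ : ℂ), norm_gb, norm_gb]
  ring

lemma KN_STFT (a : SchwartzMap (EuclideanSpace ℝ (Fin d ⊕ Fin d)) ℂ) (f : SchwartzMap (En d) ℂ)
    (x ω : En d) :
    (kc3 d : ℂ) * STFT (KNop a f) x ω =
      ∫ w, ∫ l, Phi3 a f x ω w l ∂(volume.prod (volume.prod (volume.prod volume)))
        ∂(volume.prod volume) := by
  have hI : Integrable (fun w => ∫ l, Phi3 a f x ω w l ∂(volume.prod (volume.prod (volume.prod volume))))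
      (volume.prod volume) := (Phi3_integrable a f x ω).integral_prod_left
  rw [integral_prod _ hI, STFT_eq, ← integral_const_mul]
  congr 1; ext t
  simp only [Phi3_int_l]
  rw [integral_const_mul]
  congr 1
  unfold KNop
  rw [← integral_mul_const, ← integral_mul_const]
  congr 1

/-- The kernel. -/
def Kk (a : SchwartzMap (EuclideanSpace ℝ (Fin d ⊕ Fin d)) ℂ)
    (z ζ : EuclideanSpace ℝ (Fin d ⊕ Fin d)) : ℝ≥0∞ :=
  ∫⁻ l : En d × En d, (ENNReal.ofReal (gb (Real.pi / 2) l.1) * ENNReal.ofReal (gb Real.pi l.2)) *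
    (‖STFT a (z + pairE ((2:ℝ)⁻¹ • l.1) 0) (ζ - pairE l.2 l.1)‖₊ : ℝ≥0∞) ∂(volume.prod volume)

lemma mm_meas : Measurable fun l : En d × En d =>
    (ENNReal.ofReal (gb (Real.pi / 2) l.1) * ENNReal.ofReal (gb Real.pi l.2)) := by
  have h1 := (continuous_gb (V := En d) (Real.pi / 2)).measurable
  have h2 := (continuous_gb (V := En d) Real.pi).measurable
  exact ((h1.comp measurable_fst).ennreal_ofReal).mul ((h2.comp measurable_snd).ennreal_ofReal)

lemma Kk_meas (a : SchwartzMap (EuclideanSpace ℝ (Fin d ⊕ Fin d)) ℂ) :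
    Measurable (Function.uncurry (Kk a)) := by
  refine Measurable.lintegral_prod_right (f := fun (p : EuclideanSpace ℝ (Fin d ⊕ Fin d) × EuclideanSpace ℝ (Fin d ⊕ Fin d))
    (l : En d × En d) => (ENNReal.ofReal (gb (Real.pi / 2) l.1) * ENNReal.ofReal (gb Real.pi l.2)) *
    (‖STFT a (p.1 + pairE ((2:ℝ)⁻¹ • l.1) 0) (p.2 - pairE l.2 l.1)‖₊ : ℝ≥0∞)) ?_
  have m1 : Measurable (fun t : (EuclideanSpace ℝ (Fin d ⊕ Fin d) × EuclideanSpace ℝ (Fin d ⊕ Fin d)) × (En d × En d) =>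
      (ENNReal.ofReal (gb (Real.pi / 2) t.2.1) * ENNReal.ofReal (gb Real.pi t.2.2))) :=
    mm_meas.comp measurable_snd
  have m3 : Measurable (fun t : (EuclideanSpace ℝ (Fin d ⊕ Fin d) × EuclideanSpace ℝ (Fin d ⊕ Fin d)) × (En d × En d) =>
      t.1.1 + pairE ((2:ℝ)⁻¹ • t.2.1) 0) :=
    (measurable_fst.comp measurable_fst).add (measurable_pairE (by fun_prop) (by fun_prop))
  have m4 : Measurable (fun t : (EuclideanSpace ℝ (Fin d ⊕ Fin d) × EuclideanSpace ℝ (Fin d ⊕ Fin d)) × (En d × En d) =>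
      t.1.2 - pairE t.2.2 t.2.1) :=
    (measurable_snd.comp measurable_fst).sub (measurable_pairE (by fun_prop) (by fun_prop))
  exact m1.mul (meas2 (STFT_meas' a.continuous) m3 m4)

/-- The right-hand side. -/
def Ik (a : SchwartzMap (EuclideanSpace ℝ (Fin d ⊕ Fin d)) ℂ) (f : SchwartzMap (En d) ℂ)
    (x ω : En d) : ℝ≥0∞ :=
  ∫⁻ ξ, ∫⁻ η, Kk a (pairE x (ω - ξ)) (pairE ξ η) * (‖STFT f (x + η) (ω - ξ)‖₊ : ℝ≥0∞)

lemma step1 (a : SchwartzMap (EuclideanSpace ℝ (Fin d ⊕ Fin d)) ℂ) (f : SchwartzMap (En d) ℂ)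
    (x ω : En d) :
    (‖STFT (KNop a f) x ω‖₊ : ℝ≥0∞) ≤ ‖(kc3 d : ℂ)‖ₑ⁻¹ * Ik a f x ω := by
  unfold Ik
  have hk : ‖(kc3 d : ℂ)‖ₑ ≠ 0 := by simpa using (kc3_pos d).ne'
  refine le_inv_mul_of hk enorm_ne_top ?_
  change ‖(kc3 d : ℂ)‖ₑ * ‖STFT (KNop a f) x ω‖ₑ ≤ _
  rw [← enorm_mul, KN_STFT, integral_integral_swap (Phi3_integrable a f x ω)]
  refine (enorm_integral_le_lintegral_enorm _).trans ?_
  have hm : AEMeasurable (fun l => ‖∫ w, Phi3 a f x ω w l ∂(volume.prod volume)‖ₑ)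
      (volume.prod (volume.prod (volume.prod volume))) := by
    refine StronglyMeasurable.aestronglyMeasurable ?_ |>.enorm
    exact (Phi3_meas a f x ω).integral_prod_left
  rw [lintegral_prod _ hm]
  rw [← lintegral_sub_left_eq_self _ ω]
  refine lintegral_mono fun ξ => ?_
  have hm2 : AEMeasurable (fun l => ‖∫ w, Phi3 a f x ω w (ω - ξ, l) ∂(volume.prod volume)‖ₑ)
      (volume.prod (volume.prod volume)) := by
    have h : StronglyMeasurable (fun l => ‖∫ w, Phi3 a f x ω w l ∂(volume.prod volume)‖ₑ) := by
      exact (Phi3_meas a f x ω).integral_prod_left.enorm.stronglyMeasurable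
    exact (h.measurable.comp (measurable_prodMk_left (x := ω - ξ))).aemeasurable
  rw [lintegral_prod _ hm2]
  rw [← lintegral_add_left_eq_self _ x]
  refine lintegral_mono fun η => ?_
  simp only [Phi3_int_w]
  rw [lintegral_const_mul', mul_comm]
  · unfold Kk
    refine le_of_eq ?_
    congr 1
    congr 1; ext l
    rw [pairE_add, pairE_sub]
    have e1 : ω - (ω - ξ) - l.2 = ξ - l.2 := by abel
    have e2 : x + η - x - l.1 = η - l.1 := by abel
    rw [e1, e2, add_zero]
    rfl
  · exact enorm_ne_top

lemma q_ne_top {q r : ℝ≥0∞} (hr : 1 ≤ r) (h1 : q ≤ r) (h2 : q ≤ dualExp r) : q ≠ ∞ := by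
  rintro rfl
  have : r = ∞ := top_le_iff.mp h1
  subst this
  simp [dualExp] at h2

lemma toReal_gt_one {q : ℝ≥0∞} (h : 1 ≤ q) (h1 : q ≠ 1) (ht : q ≠ ∞) : 1 < q.toReal := by
  rw [← ENNReal.toReal_one, ENNReal.toReal_lt_toReal (by simp) ht]
  exact lt_of_le_of_ne h (Ne.symm h1)

lemma conj_dual {q : ℝ≥0∞} (h : 1 ≤ q) (ht : q ≠ ∞) : ConjPair q (dualExp q) := by
  by_cases h1 : q = 1
  · left; simp [dualExp, h1]
  · right
    have := toReal_gt_one h h1 ht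
    have h0 : 0 < q.toReal - 1 := by linarith
    simp only [dualExp, h1, ht, if_false]
    refine ⟨ht, ENNReal.ofReal_ne_top, ?_⟩
    rw [ENNReal.toReal_ofReal (by positivity)]
    field_simp
    ring

lemma dual_swap {q r : ℝ≥0∞} (h : 1 ≤ q) (hr : 1 ≤ r) (ht : q ≠ ∞) (h2 : q ≤ dualExp r) :
    r ≤ dualExp q := by
  by_cases h1 : q = 1
  · simp [dualExp, h1]
  have hq := toReal_gt_one h h1 ht
  by_cases hr1 : r = 1
  · have : dualExp q = ENNReal.ofReal (q.toReal / (q.toReal - 1)) := by simp [dualExp, h1, ht]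
    rw [this, hr1, ← ENNReal.ofReal_one]
    apply ENNReal.ofReal_le_ofReal
    rw [le_div_iff₀ (by linarith)]; linarith
  by_cases hrt : r = ∞
  · subst hrt
    have : dualExp ∞ = 1 := by simp [dualExp]
    rw [this] at h2
    exact absurd (le_antisymm h2 h) h1
  have hr' := toReal_gt_one hr hr1 hrt
  have e1 : dualExp q = ENNReal.ofReal (q.toReal / (q.toReal - 1)) := by simp [dualExp, h1, ht]
  have e2 : dualExp r = ENNReal.ofReal (r.toReal / (r.toReal - 1)) := by simp [dualExp, hr1, hrt]
  rw [e2, ENNReal.le_ofReal_iff_toReal_le ht (div_nonneg (by linarith) (by linarith)),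
    le_div_iff₀ (by linarith)] at h2
  rw [e1, ENNReal.le_ofReal_iff_toReal_le hrt (div_nonneg (by linarith) (by linarith)),
    le_div_iff₀ (by linarith)]
  linarith

/-- total constant -/
def cTot (d : ℕ) : ℝ≥0∞ :=
  ‖(kc3 d : ℂ)‖ₑ⁻¹ * ((∫⁻ l : En d × En d, (ENNReal.ofReal (gb (Real.pi / 2) l.1) *
    ENNReal.ofReal (gb Real.pi l.2)) ∂(volume.prod volume)) *
    (1 + ‖kc (Fin d ⊕ Fin d)‖ₑ⁻¹ * (1 + ∫⁻ y : EuclideanSpace ℝ (Fin d ⊕ Fin d), ENNReal.ofReal (gb (Real.pi / 2) y)) *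
      ∫⁻ y : EuclideanSpace ℝ (Fin d ⊕ Fin d), ENNReal.ofReal (gb (Real.pi / 2) y)))

lemma cTot_ne_top (d : ℕ) : cTot d ≠ ∞ := by
  have hp : 0 < Real.pi / 2 := by have := Real.pi_pos; positivity
  have h1 := gauss_lint (ι := Fin d ⊕ Fin d) hp
  have h2 : ‖(kc3 d : ℂ)‖ₑ⁻¹ ≠ ∞ := by
    rw [ENNReal.inv_ne_top]; simpa using (kc3_pos d).ne'
  have h3 : ‖kc (Fin d ⊕ Fin d)‖ₑ⁻¹ ≠ ∞ := by
    rw [ENNReal.inv_ne_top]; simpa using kc_ne _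
  have h4 : (∫⁻ l : En d × En d, (ENNReal.ofReal (gb (Real.pi / 2) l.1) *
    ENNReal.ofReal (gb Real.pi l.2)) ∂(volume.prod volume)) ≠ ∞ := by
    rw [lintegral_prod_mul (f := fun y : En d => ENNReal.ofReal (gb (Real.pi / 2) y)) (g := fun y : En d => ENNReal.ofReal (gb (Real.pi) y))]
    · exact ENNReal.mul_ne_top (gauss_lint hp) (gauss_lint Real.pi_pos)
    · exact (continuous_gb _).measurable.ennreal_ofReal.aemeasurable
    · exact (continuous_gb _).measurable.ennreal_ofReal.aemeasurable
  unfold cTot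
  refine ENNReal.mul_ne_top h2 (ENNReal.mul_ne_top h4 (ENNReal.add_ne_top.mpr ⟨by simp, ?_⟩))
  exact ENNReal.mul_ne_top (ENNReal.mul_ne_top h3 (ENNReal.add_ne_top.mpr ⟨by simp, h1⟩)) h1

lemma Ik_meas (a : SchwartzMap (EuclideanSpace ℝ (Fin d ⊕ Fin d)) ℂ) (f : SchwartzMap (En d) ℂ) :
    Measurable (Function.uncurry (Ik a f)) := by
  have mF := STFT_meas' f.continuous
  have mK := Kk_meas a
  refine Measurable.lintegral_prod_right (f := fun (p : En d × En d) ξ => ∫⁻ η, Kk a (pairE p.1 (p.2 - ξ)) (pairE ξ η) * (‖STFT f (p.1 + η) (p.2 - ξ)‖₊ : ℝ≥0∞)) ?_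
  refine Measurable.lintegral_prod_right (f := fun (p : (En d × En d) × En d) η => Kk a (pairE p.1.1 (p.1.2 - p.2)) (pairE p.2 η) * (‖STFT f (p.1.1 + η) (p.1.2 - p.2)‖₊ : ℝ≥0∞)) ?_
  refine Measurable.mul ?_ ?_
  · exact meas2 mK (measurable_pairE (by fun_prop) (by fun_prop))
      (measurable_pairE (by fun_prop) (by fun_prop))
  · exact meas2 mF (by fun_prop) (by fun_prop)

lemma modKN_le {r s : ℝ≥0∞} (hr : 1 ≤ r) (hs : 1 ≤ s)
    (a : SchwartzMap (EuclideanSpace ℝ (Fin d ⊕ Fin d)) ℂ) (f : SchwartzMap (En d) ℂ) :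
    modNorm r s (KNop ⇑a ⇑f) ≤ ‖(kc3 d : ℂ)‖ₑ⁻¹ *
      lqNorm volume s (fun ω => lqNorm volume r (fun x => Ik a f x ω)) := by
  have mI := Ik_meas a f
  have mI1 : Measurable (fun ω => lqNorm volume r (fun x => Ik a f x ω)) := lq_meas r mI
  have e1 : ∀ ω : En d, lqNorm volume r (fun x => (‖STFT (KNop ⇑a ⇑f) x ω‖₊ : ℝ≥0∞)) ≤
      ‖(kc3 d : ℂ)‖ₑ⁻¹ * lqNorm volume r (fun x => Ik a f x ω) := by
    intro ω
    have m2 : Measurable (fun x => Ik a f x ω) := meas2 mI measurable_id measurable_const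
    have e2 := lq_const_mul (μ := volume) hr m2 (‖(kc3 d : ℂ)‖ₑ⁻¹)
    have e3 : lqNorm volume r (fun x => (‖STFT (KNop ⇑a ⇑f) x ω‖₊ : ℝ≥0∞)) ≤
      lqNorm volume r (fun x => ‖(kc3 d : ℂ)‖ₑ⁻¹ * Ik a f x ω) := lq_mono fun x => step1 a f x ω
    exact e3.trans (le_of_eq e2)
  have e4 := lq_const_mul (μ := volume) hs mI1 (‖(kc3 d : ℂ)‖ₑ⁻¹)
  exact (lq_mono (μ := volume) (p := s) e1).trans (le_of_eq e4)

lemma main_bound {p q r s : ℝ≥0∞}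
    (hp : 1 ≤ p) (hq : 1 ≤ q) (hr : 1 ≤ r) (hs : 1 ≤ s)
    (h1 : p ≤ dualExp q)
    (h2 : q ≤ min (min r (dualExp r)) (min s (dualExp s)))
    (a : SchwartzMap (EuclideanSpace ℝ (Fin d ⊕ Fin d)) ℂ) (f : SchwartzMap (En d) ℂ) :
    modNorm r s (KNop ⇑a ⇑f) ≤ cTot d * modNorm p q ⇑a * modNorm r s ⇑f := by
  simp only [le_min_iff] at h2
  obtain ⟨⟨hqr, hqr'⟩, hqs, hqs'⟩ := h2
  have hqt := q_ne_top hr hqr hqr'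
  have hrQ := dual_swap hq hr hqt hqr'
  have hsQ := dual_swap hq hs hqt hqs'
  have hc := conj_dual hq hqt
  have mA := STFT_meas' a.continuous
  have mF := STFT_meas' f.continuous
  have mK := Kk_meas a
  have mρ : Measurable fun y : EuclideanSpace ℝ (Fin d ⊕ Fin d) => ENNReal.ofReal (gb (Real.pi / 2) y) :=
    (continuous_gb _).measurable.ennreal_ofReal
  have B := normB hq hqr hrQ hqs hsQ hqt hc mK mF
  have C := normC (ν := (volume.prod volume : Measure (En d × En d))) (q := q) (Q := dualExp q) hq (hp.trans h1) mA mm_meas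
    (φ := fun l : En d × En d => pairE ((2:ℝ)⁻¹ • l.1) 0) (ψ := fun l => pairE l.2 l.1)
    (measurable_pairE (by fun_prop) (by fun_prop)) (measurable_pairE (by fun_prop) (by fun_prop))
  have D := normD (p := p) (q := q) (Q := dualExp q) hq hqt hp h1 mA mρ
    (fun y => by
      rw [ENNReal.ofReal_le_one]
      exact gb_le (by have := Real.pi_pos; positivity) y) _ (stft_rep a)
  have S := modKN_le hr hs a f
  refine S.trans ?_
  unfold cTot
  rw [mul_assoc, mul_assoc]
  refine mul_le_mul' le_rfl ?_
  refine B.trans ?_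
  rw [← mul_assoc]
  refine mul_le_mul' ?_ le_rfl
  refine C.trans ?_
  rw [mul_assoc]
  exact mul_le_mul' le_rfl D
end

end

/-- if `p ≤ q'` and `q ≤ min{r,r',s,s'}`, then symbols in `M^{p,q}`
give operators bounded on `M^{r,s}`. -/
theorem kn_Mpq_bounded_on_modulation (d : ℕ) (p q r s : ℝ≥0∞)
    (hp : 1 ≤ p) (hq : 1 ≤ q) (hr : 1 ≤ r) (hs : 1 ≤ s)
    (h1 : p ≤ dualExp q)
    (h2 : q ≤ min (min r (dualExp r)) (min s (dualExp s))) :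
    ∃ C : ℝ, 0 < C ∧
      ∀ (a : SchwartzMap (EuclideanSpace ℝ (Fin d ⊕ Fin d)) ℂ)
        (f : SchwartzMap (EuclideanSpace ℝ (Fin d)) ℂ),
        modNorm r s (KNop ⇑a ⇑f) ≤
          ENNReal.ofReal C * modNorm p q ⇑a * modNorm r s ⇑f := by
  refine ⟨(cTot d).toReal + 1, by positivity, fun a f => ?_⟩
  refine (main_bound hp hq hr hs h1 h2 a f).trans ?_
  gcongr
  rw [ENNReal.le_ofReal_iff_toReal_le (cTot_ne_top d) (by positivity)]
  linarith
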